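/- Let p be an odd prime, p > 3. If PSL(2, p) acts faithfully by diffeomorphisms on Euclidean space R^n, then n ≥ p − 1 when p ≡ 3 (mod 4), and n ≥ (p + 1)/2 when p ≡ 1 (mod 4). These bounds are sharp: they are realized by faithful linear actions of PSL(2, p) on R^{p−1} and R^{(p+1)/2} respectively. -/

import Mathlib

namespace Smith

section Chains
variable {F : Type*} [Field F] {X Y : Type*}

/-- Chains on `k`-tuples of points of `X`. -/
abbrev Chain (F : Type*) [Field F] (X : Type*) (k : ℕ) := (Fin k → X) →₀ F

/-- augmented boundary -/
noncomputable def bd (F : Type*) [Field F] (X : Type*) (k : ℕ) : Chain F X (k+1) →ₗ[F] Chain F X k :=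
  Finsupp.linearCombination F (fun v : Fin (k+1) → X =>
    ∑ i : Fin (k+1), ((-1 : F)^(i : ℕ)) • (Finsupp.single (v ∘ i.succAbove) (1:F)))

/-- cone operator -/
noncomputable def cone (F : Type*) [Field F] {X : Type*} (y : X) (k : ℕ) : Chain F X k →ₗ[F] Chain F X (k+1) :=
  Finsupp.lmapDomain F F (fun v : Fin k → X => (Fin.cons y v : Fin (k+1) → X))

/-- functoriality -/
noncomputable def cmap (F : Type*) [Field F] (f : X → Y) (k : ℕ) : Chain F X k →ₗ[F] Chain F Y k :=
  Finsupp.lmapDomain F F (fun v : Fin k → X => f ∘ v)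

lemma bd_single (k : ℕ) (v : Fin (k+1) → X) : bd F X k (Finsupp.single v 1) =
    ∑ i : Fin (k+1), ((-1 : F)^(i : ℕ)) • (Finsupp.single (v ∘ i.succAbove) (1:F)) := by
  simp [bd]

lemma cone_single (k : ℕ) (y : X) (v : Fin k → X) : cone F y k (Finsupp.single v 1) =
    Finsupp.single (Fin.cons y v : Fin (k+1) → X) 1 := by
  simp [cone]

lemma cmap_single (k : ℕ) (f : X → Y) (v : Fin k → X) : cmap F f k (Finsupp.single v 1) =
    Finsupp.single (f ∘ v) 1 := by
  simp [cmap]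

lemma chain_ext {M : Type*} [AddCommMonoid M] [Module F M] {k : ℕ} {f g : Chain F X k →ₗ[F] M}
    (h : ∀ v, f (Finsupp.single v 1) = g (Finsupp.single v 1)) : f = g := by
  apply Finsupp.lhom_ext'
  intro v
  apply LinearMap.ext_ring
  simpa using h v

lemma cmap_bd (k : ℕ) (f : X → Y) (c : Chain F X (k+1)) :
    bd F Y k (cmap F f (k+1) c) = cmap F f k (bd F X k c) := by
  have : (bd F Y k) ∘ₗ (cmap F f (k+1)) = (cmap F f k) ∘ₗ (bd F X k) := by
    apply chain_ext
    intro v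
    simp only [LinearMap.comp_apply, cmap_single, bd_single, map_sum, map_smul]
    rfl
  exact LinearMap.congr_fun this c

lemma bd_cone_single (k : ℕ) (y : X) (v : Fin (k+1) → X) :
    bd F X (k+1) (Finsupp.single (Fin.cons y v : Fin (k+2) → X) 1)
      = Finsupp.single v 1 - cone F y k (bd F X k (Finsupp.single v 1)) := by
  rw [bd_single, Fin.sum_univ_succ, bd_single, map_sum, sub_eq_add_neg, ← Finset.sum_neg_distrib]
  congr 1
  · simp
  · refine Finset.sum_congr rfl fun i _ => ?_
    rw [map_smul, cone_single]
    have : (Fin.cons y v : Fin (k+2) → X) ∘ i.succ.succAbove = Fin.cons y (v ∘ i.succAbove) := by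
      funext j
      refine Fin.cases ?_ (fun j => ?_) j
      · simp
      · simp
    rw [this, Fin.val_succ, pow_succ]
    simp

lemma bd_cone (k : ℕ) (y : X) (c : Chain F X (k+1)) :
    bd F X (k+1) (cone F y (k+1) c) = c - cone F y k (bd F X k c) := by
  have : (bd F X (k+1)) ∘ₗ (cone F y (k+1)) = LinearMap.id - (cone F y k) ∘ₗ (bd F X k) := by
    apply chain_ext
    intro v
    simp only [LinearMap.comp_apply, cone_single, LinearMap.sub_apply, LinearMap.id_apply]
    exact bd_cone_single k y v
  simpa using LinearMap.congr_fun this c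

lemma bd_cone_zero (y : X) (c : Chain F X 0) : bd F X 0 (cone F y 0 c) = c := by
  have : (bd F X 0) ∘ₗ (cone F y 0) = LinearMap.id := by
    apply chain_ext
    intro v
    simp only [LinearMap.comp_apply, cone_single, bd_single, LinearMap.id_apply]
    simp
  exact LinearMap.congr_fun this c

lemma bd_bd (k : ℕ) (c : Chain F X (k+2)) : bd F X k (bd F X (k+1) c) = 0 := by
  induction k with
  | zero =>
    have : (bd F X 0) ∘ₗ (bd F X 1) = 0 := by
      apply chain_ext
      intro v
      obtain ⟨y, w, rfl⟩ : ∃ y w, v = (Fin.cons y w : Fin 2 → X) := ⟨v 0, Fin.tail v, (Fin.cons_self_tail v).symm⟩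
      simp only [LinearMap.comp_apply]
      rw [bd_cone_single, map_sub, bd_cone_zero]
      simp
    exact LinearMap.congr_fun this c
  | succ k ih =>
    have : (bd F X (k+1)) ∘ₗ (bd F X (k+2)) = 0 := by
      apply chain_ext
      intro v
      obtain ⟨y, w, rfl⟩ : ∃ y w, v = (Fin.cons y w : Fin (k+3) → X) := ⟨v 0, Fin.tail v, (Fin.cons_self_tail v).symm⟩
      simp only [LinearMap.comp_apply]
      rw [bd_cone_single, map_sub, bd_cone, ih]
      simp
    exact LinearMap.congr_fun this c

/-- pairing of cochains with chains -/
noncomputable def pair {k : ℕ} (a : (Fin k → X) → F) : Chain F X k →ₗ[F] F :=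
  Finsupp.linearCombination F a

lemma pair_single {k : ℕ} (a : (Fin k → X) → F) (v) : pair a (Finsupp.single v 1) = a v := by
  simp [pair]

/-- coboundary -/
noncomputable def cod {k : ℕ} (a : (Fin k → X) → F) : (Fin (k+1) → X) → F := fun v =>
  ∑ i : Fin (k+1), ((-1 : F)^(i : ℕ)) * a (v ∘ i.succAbove)

lemma pair_cod {k : ℕ} (a : (Fin k → X) → F) (c : Chain F X (k+1)) :
    pair (cod a) c = pair a (bd F X k c) := by
  have : pair (cod a) = (pair a) ∘ₗ (bd F X k) := by
    apply chain_ext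
    intro v
    simp only [LinearMap.comp_apply, bd_single, map_sum, map_smul, pair_single, cod, smul_eq_mul]
  exact LinearMap.congr_fun this c

lemma cod_cod {k : ℕ} (a : (Fin k → X) → F) : cod (cod a) = 0 := by
  funext v
  rw [← pair_single (cod (cod a)) v, pair_cod, pair_cod, bd_bd]
  simp

lemma pair_cmap {k : ℕ} (f : X → Y) (a : (Fin k → Y) → F) (c : Chain F X k) :
    pair a (cmap F f k c) = pair (fun v => a (f ∘ v)) c := by
  have : (pair a) ∘ₗ (cmap F f k) = pair (fun v => a (f ∘ v)) := by
    apply chain_ext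
    intro v
    simp only [LinearMap.comp_apply, cmap_single, pair_single]
  exact LinearMap.congr_fun this c

lemma pair_congr {k : ℕ} {a b : (Fin k → X) → F} {c : Chain F X k} {S : Set (Fin k → X)}
    (hc : c ∈ Finsupp.supported F F S) (h : ∀ v ∈ S, a v = b v) : pair a c = pair b c := by
  simp only [pair, Finsupp.linearCombination_apply]
  refine Finsupp.sum_congr fun v hv => ?_
  rw [h v (hc hv)]

lemma cmap_comp {Z : Type*} {k : ℕ} (f : X → Y) (g : Y → Z) (c : Chain F X k) :
    cmap F g k (cmap F f k c) = cmap F (g ∘ f) k c := by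
  have : (cmap F g k) ∘ₗ (cmap F f k) = cmap F (g ∘ f) k := by
    apply chain_ext
    intro v
    simp only [LinearMap.comp_apply, cmap_single]
    rfl
  exact LinearMap.congr_fun this c

lemma cmap_id {k : ℕ} (c : Chain F X k) : cmap F (id : X → X) k c = c := by
  have : cmap F (id : X → X) k = LinearMap.id := by
    apply chain_ext
    intro v
    simp only [cmap_single, LinearMap.id_apply]
    rfl
  exact LinearMap.congr_fun this c

lemma map_supported {k l : ℕ} (f : Chain F X k →ₗ[F] Chain F Y l) {S : Set (Fin k → X)} {S' : Set (Fin l → Y)}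
    (h : ∀ v ∈ S, f (Finsupp.single v 1) ∈ Finsupp.supported F F S') {c : Chain F X k}
    (hc : c ∈ Finsupp.supported F F S) : f c ∈ Finsupp.supported F F S' := by
  have hc' : c = c.sum (fun v r => r • Finsupp.single v (1:F)) := by
    conv_lhs => rw [← Finsupp.sum_single c]
    simp
  rw [hc', Finsupp.sum, map_sum]
  refine Submodule.sum_mem _ fun v hv => ?_
  rw [map_smul]
  exact Submodule.smul_mem _ _ (h v (hc hv))

lemma single_supported {k : ℕ} {S : Set (Fin k → X)} {v} (hv : v ∈ S) :
    Finsupp.single v (1:F) ∈ Finsupp.supported F F S := Finsupp.single_mem_supported _ _ hv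

/-- chain homotopy between `s` and `t` -/
noncomputable def hmt (F : Type*) [Field F] {X : Type*} (s t : X → X) : (k : ℕ) → (Chain F X k →ₗ[F] Chain F X (k+1))
  | 0 => 0
  | (k+1) => Finsupp.linearCombination F (fun v : Fin (k+1) → X =>
      cone F (s (v 0)) (k+1) (Finsupp.single (t ∘ v) 1 - Finsupp.single (s ∘ v) 1 - hmt F s t k (bd F X k (Finsupp.single v 1))))

lemma bd_hmt (s t : X → X) (k : ℕ) (c : Chain F X (k+1)) :
    bd F X (k+1) (hmt F s t (k+1) c) = cmap F t (k+1) c - cmap F s (k+1) c - hmt F s t k (bd F X k c) := by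
  induction k with
  | zero =>
    have : (bd F X 1) ∘ₗ (hmt F s t 1) = cmap F t 1 - cmap F s 1 - (hmt F s t 0) ∘ₗ (bd F X 0) := by
      apply chain_ext
      intro v
      simp only [LinearMap.comp_apply, LinearMap.sub_apply, cmap_single]
      simp only [hmt, Finsupp.linearCombination_single, one_smul, LinearMap.zero_apply, sub_zero]
      rw [bd_cone]
      rw [← cmap_single, ← cmap_single, map_sub (bd F X 0), cmap_bd, cmap_bd]
      have : ∀ (f : X → X) (c : Chain F X 0), cmap F f 0 c = c := by
        intro f c
        rw [← cmap_id (F := F) c, cmap_comp]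
        have : cmap F (f ∘ id) 0 = (cmap F id 0 : Chain F X 0 →ₗ[F] _) := by
          apply chain_ext
          intro v
          rw [cmap_single, cmap_single]
          congr 1
          exact Subsingleton.elim _ _
        rw [this, cmap_id]
      rw [this, this]
      simp
    simpa using LinearMap.congr_fun this c
  | succ k ih =>
    have : (bd F X (k+2)) ∘ₗ (hmt F s t (k+2)) = cmap F t (k+2) - cmap F s (k+2) - (hmt F s t (k+1)) ∘ₗ (bd F X (k+1)) := by
      apply chain_ext
      intro v
      simp only [LinearMap.comp_apply, LinearMap.sub_apply, cmap_single]
      rw [hmt, Finsupp.linearCombination_single, one_smul, bd_cone]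
      rw [map_sub (bd F X (k+1)), ih, bd_bd, ← cmap_single, ← cmap_single, map_sub (bd F X (k+1)), cmap_bd, cmap_bd]
      simp
    simpa using LinearMap.congr_fun this c

lemma hmt_supported (s t : X → X) (k : ℕ) (v : Fin k → X) :
    hmt F s t k (Finsupp.single v 1) ∈ Finsupp.supported F F {w | ∀ i, ∃ j, w i = s (v j) ∨ w i = t (v j)} := by
  induction k with
  | zero => simp [hmt]
  | succ k ih =>
    rw [hmt, Finsupp.linearCombination_single, one_smul]
    have h1 : Finsupp.single (t ∘ v) 1 - Finsupp.single (s ∘ v) 1 - hmt F s t k (bd F X k (Finsupp.single v 1)) ∈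
        Finsupp.supported F F {w : Fin (k+1) → X | ∀ i, ∃ j, w i = s (v j) ∨ w i = t (v j)} := by
      refine Submodule.sub_mem _ (Submodule.sub_mem _ ?_ ?_) ?_
      · exact single_supported fun i => ⟨i, Or.inr rfl⟩
      · exact single_supported fun i => ⟨i, Or.inl rfl⟩
      · rw [bd_single, map_sum]
        refine Submodule.sum_mem _ fun i _ => ?_
        rw [map_smul]
        refine Submodule.smul_mem _ _ ?_
        refine Finsupp.supported_mono ?_ (ih _)
        intro w hw i'
        obtain ⟨j, hj⟩ := hw i'
        exact ⟨_, hj⟩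
    refine map_supported _ ?_ h1
    intro w hw
    rw [cone_single]
    refine single_supported ?_
    intro i
    refine Fin.cases ?_ (fun i => ?_) i
    · exact ⟨0, Or.inl rfl⟩
    · simpa using hw i

end Chains
end Smith


set_option linter.unusedSectionVars false
set_option linter.style.longLine false
namespace Smith
section Fill
variable {F : Type*} [Field F] {E : Type*} [NormedAddCommGroup E] [NormedSpace ℝ E]

/-- small tuples in a ball -/
def small (E : Type*) [NormedAddCommGroup E] (k : ℕ) (ε R : ℝ) : Set (Fin k → E) :=
  {v | (∀ i, ‖v i‖ ≤ R) ∧ ∀ i j, dist (v i) (v j) < ε}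

lemma small_mono {k : ℕ} {ε ε' R R' : ℝ} (h : ε ≤ ε') (h' : R ≤ R') : small E k ε R ⊆ small E k ε' R' :=
  fun _ hv => ⟨fun i => (hv.1 i).trans h', fun i j => (hv.2 i j).trans_le h⟩

lemma fill {k : ℕ} {δ ε R : ℝ} (hδ : 0 < δ) (hR : 0 ≤ R) (hε : δ < ε) (z : Chain F E (k+1))
    (hz : z ∈ Finsupp.supported F F (small E (k+1) δ R)) (hbd : bd F E k z = 0) :
    ∃ w : Chain F E (k+2), w ∈ Finsupp.supported F F (small E (k+2) ε R) ∧ bd F E (k+1) w = z := by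
  obtain ⟨M, hM⟩ := exists_nat_gt (R / (ε - δ))
  have hεδ : 0 < ε - δ := by linarith
  have hM0 : (0:ℝ) < M := lt_of_le_of_lt (by positivity) hM
  have hRM : R / M < ε - δ := by
    rw [div_lt_iff₀ hεδ] at hM
    rw [div_lt_iff₀ hM0]; linarith
  let s : ℕ → E → E := fun j x => (1 - (j:ℝ)/M) • x
  have key : ∀ j ≤ M, ∃ w : Chain F E (k+2), w ∈ Finsupp.supported F F (small E (k+2) ε R) ∧
      bd F E (k+1) w = z - cmap F (s j) (k+1) z := by
    intro j
    induction j with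
    | zero =>
      intro _
      refine ⟨0, Submodule.zero_mem _, ?_⟩
      have : s 0 = id := by funext x; simp [s]
      rw [this, cmap_id]; simp
    | succ j ih =>
      intro hj
      obtain ⟨w, hw, hw'⟩ := ih (by omega)
      refine ⟨w - hmt F (s j) (s (j+1)) (k+1) z, Submodule.sub_mem _ hw ?_, ?_⟩
      · refine map_supported _ ?_ hz
        intro v hv
        refine Finsupp.supported_mono ?_ (hmt_supported _ _ _ v)
        have hj1 : ((j:ℝ)+1) / M ≤ 1 := by
          rw [div_le_one hM0]; exact_mod_cast hj
        have hj0 : (j:ℝ) / M ≤ 1 := by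
          refine le_trans ?_ hj1
          gcongr; linarith
        have hj0' : 0 ≤ (j:ℝ)/M := by positivity
        have hj1' : 0 ≤ ((j:ℝ)+1)/M := by positivity
        have h0 : ∀ x : E, ‖x‖ ≤ R → ‖s j x‖ ≤ R := by
          intro x hx
          simp only [s, norm_smul, Real.norm_eq_abs]
          rw [abs_of_nonneg (by linarith)]
          nlinarith [norm_nonneg x]
        have h1 : ∀ x : E, ‖x‖ ≤ R → ‖s (j+1) x‖ ≤ R := by
          intro x hx
          simp only [s, norm_smul, Real.norm_eq_abs]
          push_cast
          rw [abs_of_nonneg (by linarith)]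
          nlinarith [norm_nonneg x]
        have d00 : ∀ x y : E, dist x y < δ → dist (s j x) (s j y) < δ := by
          intro x y h
          simp only [s, dist_smul₀, Real.norm_eq_abs]
          rw [abs_of_nonneg (by linarith)]
          nlinarith [dist_nonneg (x := x) (y := y)]
        have d11 : ∀ x y : E, dist x y < δ → dist (s (j+1) x) (s (j+1) y) < δ := by
          intro x y h
          simp only [s, dist_smul₀, Real.norm_eq_abs]
          push_cast
          rw [abs_of_nonneg (by linarith)]
          nlinarith [dist_nonneg (x := x) (y := y)]
        have d01 : ∀ x : E, ‖x‖ ≤ R → dist (s j x) (s (j+1) x) ≤ R / M := by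
          intro x hx
          simp only [s, dist_eq_norm, ← sub_smul, norm_smul, Real.norm_eq_abs]
          push_cast
          have : (1 - (j:ℝ)/M) - (1 - ((j:ℝ)+1)/M) = 1 / M := by ring
          rw [this, abs_of_nonneg (by positivity), div_mul_eq_mul_div, one_mul]
          gcongr
        intro w hw
        refine ⟨fun i => ?_, fun i i' => ?_⟩
        · obtain ⟨l, h | h⟩ := hw i
          · rw [h]; exact h0 _ (hv.1 l)
          · rw [h]; exact h1 _ (hv.1 l)
        · obtain ⟨l, h⟩ := hw i
          obtain ⟨l', h'⟩ := hw i'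
          have hd := hv.2 l l'
          have hd' := hv.2 l' l
          rcases h with h | h <;> rcases h' with h' | h' <;> rw [h, h']
          · linarith [d00 _ _ hd]
          · linarith [d00 _ _ hd, d01 _ (hv.1 l'), dist_triangle (s j (v l)) (s j (v l')) (s (j+1) (v l'))]
          · rw [dist_comm]
            linarith [d00 _ _ hd', d01 _ (hv.1 l), dist_triangle (s j (v l')) (s j (v l)) (s (j+1) (v l))]
          · linarith [d11 _ _ hd]
      · rw [map_sub, hw', bd_hmt, hbd]
        simp
  obtain ⟨w, hw, hw'⟩ := key M le_rfl
  have hsM : s M = fun _ => 0 := by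
    funext x
    simp only [s]
    rw [div_self hM0.ne']; simp
  refine ⟨w + cone F 0 (k+1) (cmap F (s M) (k+1) z), Submodule.add_mem _ hw ?_, ?_⟩
  · have : cone F 0 (k+1) (cmap F (s M) (k+1) z) = ((cone F 0 (k+1)) ∘ₗ (cmap F (s M) (k+1))) z := rfl
    rw [this]
    refine map_supported _ ?_ hz
    intro v hv
    rw [LinearMap.comp_apply, cmap_single, cone_single]
    refine single_supported ?_
    have : ∀ i, (Fin.cons 0 (s M ∘ v) : Fin (k+2) → E) i = 0 := by
      intro i
      refine Fin.cases ?_ (fun i => ?_) i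
      · simp
      · simp [hsM]
    refine ⟨fun i => ?_, fun i j => ?_⟩
    · rw [this]; simpa using hR
    · rw [this, this]; simp; linarith
  · rw [map_add, hw', bd_cone, cmap_bd, hbd]
    simp

end Fill
end Smith


set_option linter.unusedSectionVars false
set_option linter.style.longLine false
namespace Smith
section Coch
variable {p : ℕ} [hp : Fact p.Prime] {ι : Type} [LinearOrder ι] [Fintype ι]

/-- vertices -/
abbrev Vx (p : ℕ) (ι : Type) := (ι × ZMod p) ⊕ Bool

/-- the shift on vertices -/
def sh (p : ℕ) (ι : Type) : Vx p ι → Vx p ι := Sum.map (fun x => (x.1, x.2 + 1)) id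

lemma sh_iter (i : ℕ) (x : Vx p ι) :
    (sh p ι)^[i] x = Sum.map (fun x => (x.1, x.2 + (i : ZMod p))) id x := by
  induction i with
  | zero => cases x <;> simp
  | succ i ih =>
    rw [Function.iterate_succ_apply', ih]
    cases x <;> simp [sh, add_assoc]

lemma sh_iter_p : (sh p ι)^[p] = id := by
  funext x
  rw [sh_iter]
  cases x <;> simp

/-- the operators `T - 1` and `N` on cochains -/
def opC {X : Type*} {k : ℕ} (e : Bool) (f : X → X) (a : (Fin k → X) → ZMod p) : (Fin k → X) → ZMod p :=
  match e with
  | true => fun v => a (f ∘ v) - a v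
  | false => fun v => ∑ i ∈ Finset.range p, a (f^[i] ∘ v)

lemma opC_cod {X : Type*} {k : ℕ} (e : Bool) (f : X → X) (a : (Fin k → X) → ZMod p) :
    opC e f (cod a) = cod (opC e f a) := by
  funext v
  cases e
  · simp only [opC, cod, Finset.mul_sum]
    rw [Finset.sum_comm]; rfl
  · simp only [opC, cod, mul_sub, Finset.sum_sub_distrib]
    rfl

/-- conditions on the compatibility relation of vertices -/
structure IsRel (r : Vx p ι → Vx p ι → Prop) : Prop where
  hT : ∀ x y, r x y → r (sh p ι x) (sh p ι y)
  h1 : ∀ c l l', r (.inl (c, l)) (.inl (c, l')) → l = l'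
  h2 : ∀ b b', r (.inr b) (.inr b') → b = b'

def good (r : Vx p ι → Vx p ι → Prop) {k : ℕ} (v : Fin k → Vx p ι) : Prop := ∀ i j, r (v i) (v j)

def free {k : ℕ} (v : Fin k → Vx p ι) : Prop := ∃ i x, v i = .inl x

variable {r : Vx p ι → Vx p ι → Prop}

lemma good.comp {k l : ℕ} {v : Fin k → Vx p ι} (h : good r v) (f : Fin l → Fin k) : good r (v ∘ f) :=
  fun i j => h (f i) (f j)

lemma good.sh (hr : IsRel r) {k : ℕ} {v : Fin k → Vx p ι} (h : good r v) : good r (sh p ι ∘ v) :=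
  fun i j => hr.hT _ _ (h i j)

lemma good.sh_iter (hr : IsRel r) {k : ℕ} {v : Fin k → Vx p ι} (h : good r v) (i : ℕ) :
    good r ((Smith.sh p ι)^[i] ∘ v) := by
  induction i with
  | zero => exact h
  | succ i ih =>
    rw [Function.iterate_succ', Function.comp_assoc]
    exact ih.sh hr

lemma free_iter {k : ℕ} {v : Fin k → Vx p ι} (i : ℕ) : free ((sh p ι)^[i] ∘ v) ↔ free v := by
  unfold free
  refine exists_congr fun j => ?_
  rw [Function.comp_apply, sh_iter]
  cases v j <;> simp

lemma free_sh {k : ℕ} {v : Fin k → Vx p ι} : free (sh p ι ∘ v) ↔ free v := free_iter 1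

lemma free_perm {k : ℕ} {v : Fin k → Vx p ι} (σ : Equiv.Perm (Fin k)) : free (v ∘ σ) ↔ free v := by
  unfold free
  exact ⟨fun ⟨i, h⟩ => ⟨σ i, h⟩, fun ⟨i, h⟩ => ⟨σ.symm i, by simpa using h⟩⟩

def isLab {k : ℕ} (v : Fin k → Vx p ι) (l : ZMod p) : Prop :=
  ∃ c, (∃ i, v i = .inl (c, l)) ∧ ∀ c' i l', v i = .inl (c', l') → c ≤ c'

lemma isLab_perm {k : ℕ} (v : Fin k → Vx p ι) (σ : Equiv.Perm (Fin k)) : isLab (v ∘ σ) = isLab v := by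
  funext l
  unfold isLab
  refine propext (exists_congr fun c => and_congr ?_ ?_)
  · exact ⟨fun ⟨i, h⟩ => ⟨σ i, h⟩, fun ⟨i, h⟩ => ⟨σ.symm i, by simpa using h⟩⟩
  · exact forall_congr' fun c' => ⟨fun h i l' hh => h (σ.symm i) l' (by simpa using hh), fun h i l' hh => h (σ i) l' hh⟩

lemma isLab_sh {k : ℕ} {v : Fin k → Vx p ι} {l : ZMod p} (h : isLab v l) : isLab (sh p ι ∘ v) (l + 1) := by
  obtain ⟨c, ⟨i, hi⟩, h2⟩ := h
  refine ⟨c, ⟨i, by simp [hi, sh]⟩, ?_⟩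
  intro c' i' l' h'
  rw [Function.comp_apply] at h'
  cases hv : v i' with
  | inl x =>
    rw [hv] at h'
    simp [sh] at h'
    exact h2 c' i' x.2 (by rw [hv, ← h'.1])
  | inr b => rw [hv] at h'; simp [sh] at h'

lemma isLab_unique (hr : IsRel r) {k : ℕ} {v : Fin k → Vx p ι} (hv : good r v) {l l' : ZMod p} (h : isLab v l)
    (h' : isLab v l') : l = l' := by
  obtain ⟨c, ⟨i, hi⟩, h2⟩ := h
  obtain ⟨c', ⟨i', hi'⟩, h2'⟩ := h'
  have : c = c' := le_antisymm (h2 _ _ _ hi') (h2' _ _ _ hi)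
  subst this
  have := hv i i'
  rw [hi, hi'] at this
  exact hr.h1 _ _ _ this

lemma isLab_exists {k : ℕ} {v : Fin k → Vx p ι} (h : free v) : ∃ l, isLab v l := by
  classical
  obtain ⟨i, x, hx⟩ := h
  let S : Finset ι := Finset.univ.filter fun c => ∃ i l, v i = .inl (c, l)
  have hS : S.Nonempty := ⟨x.1, by simp only [S, Finset.mem_filter, Finset.mem_univ, true_and]; exact ⟨i, x.2, hx⟩⟩
  have h1 := S.min'_mem hS
  simp only [S, Finset.mem_filter, Finset.mem_univ, true_and] at h1
  obtain ⟨j, l, hj⟩ := h1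
  refine ⟨l, S.min' hS, ⟨j, hj⟩, ?_⟩
  intro c' i' l' h'
  refine S.min'_le _ ?_
  simp only [S, Finset.mem_filter, Finset.mem_univ, true_and]
  exact ⟨i', l', h'⟩

noncomputable def lab {k : ℕ} (v : Fin k → Vx p ι) : ZMod p := Classical.epsilon (isLab v)

lemma lab_perm {k : ℕ} (v : Fin k → Vx p ι) (σ : Equiv.Perm (Fin k)) : lab (v ∘ σ) = lab v := by
  unfold lab; rw [isLab_perm]

lemma lab_spec {k : ℕ} {v : Fin k → Vx p ι} (h : free v) : isLab v (lab v) :=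
  Classical.epsilon_spec (isLab_exists h)

lemma lab_sh (hr : IsRel r) {k : ℕ} {v : Fin k → Vx p ι} (hv : good r v) (h : free v) :
    lab (sh p ι ∘ v) = lab v + 1 :=
  isLab_unique hr (hv.sh hr) (lab_spec (free_sh.2 h)) (isLab_sh (lab_spec h))

lemma lab_iter (hr : IsRel r) {k : ℕ} {v : Fin k → Vx p ι} (hv : good r v) (h : free v) (i : ℕ) :
    lab ((sh p ι)^[i] ∘ v) = lab v + i := by
  induction i with
  | zero => simp
  | succ i ih =>
    rw [Function.iterate_succ', Function.comp_assoc, lab_sh hr (hv.sh_iter hr i) ((free_iter i).2 h), ih]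
    push_cast; ring

/-- alternating on good tuples -/
def alt (r : Vx p ι → Vx p ι → Prop) {k : ℕ} (a : (Fin k → Vx p ι) → ZMod p) : Prop :=
  ∀ v, good r v → ∀ σ : Equiv.Perm (Fin k), a (v ∘ σ) = ((Equiv.Perm.sign σ : ℤ) : ZMod p) * a v

lemma cod_swap {k : ℕ} {a : (Fin k → Vx p ι) → ZMod p} (ha : alt r a) (v : Fin (k+1) → Vx p ι)
    (hv : good r v) (i : Fin k) : cod a (v ∘ Equiv.swap i.castSucc i.succ) = - cod a v := by
  set σ := Equiv.swap i.castSucc i.succ with hσ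
  unfold cod
  rw [← Finset.sum_neg_distrib]
  refine Fintype.sum_equiv σ _ _ fun j => ?_
  have hii : i.castSucc ≠ i.succ := (Fin.castSucc_lt_succ).ne
  by_cases h1 : j = i.castSucc
  · have : σ j = i.succ := by rw [h1, hσ, Equiv.swap_apply_left]
    rw [this, h1]
    have : (v ∘ σ) ∘ i.castSucc.succAbove = v ∘ i.succ.succAbove := by
      funext l
      simp only [Function.comp_apply]
      congr 1
      rcases lt_trichotomy l i with h | h | h
      · rw [Fin.succAbove_of_castSucc_lt _ _ (by simpa using h), Fin.succAbove_of_castSucc_lt _ _ (by rw [Fin.lt_def] at *; simp; omega)]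
        rw [hσ, Equiv.swap_apply_of_ne_of_ne]
        · simpa using h.ne
        · intro h'; rw [Fin.ext_iff] at h'; rw [Fin.lt_def] at h; simp at h'; omega
      · subst h
        simp [hσ]
      · rw [Fin.succAbove_of_le_castSucc _ _ (by simpa using h.le), Fin.succAbove_of_le_castSucc _ _ (by rw [Fin.lt_def] at h; rw [Fin.le_def]; simp; omega)]
        rw [hσ, Equiv.swap_apply_of_ne_of_ne]
        · intro h'; rw [Fin.ext_iff] at h'; rw [Fin.lt_def] at h; simp at h'; omega
        · simpa using h.ne'
    rw [this]
    simp [pow_succ]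
  by_cases h2 : j = i.succ
  · have : σ j = i.castSucc := by rw [h2, hσ, Equiv.swap_apply_right]
    rw [this, h2]
    have : (v ∘ σ) ∘ i.succ.succAbove = v ∘ i.castSucc.succAbove := by
      funext l
      simp only [Function.comp_apply]
      congr 1
      rcases lt_trichotomy l i with h | h | h
      · rw [Fin.succAbove_of_castSucc_lt i.castSucc _ (by simpa using h), Fin.succAbove_of_castSucc_lt _ _ (by rw [Fin.lt_def] at *; simp; omega)]
        rw [hσ, Equiv.swap_apply_of_ne_of_ne]
        · simpa using h.ne
        · intro h'; rw [Fin.ext_iff] at h'; rw [Fin.lt_def] at h; simp at h'; omega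
      · subst h
        simp [hσ]
      · rw [Fin.succAbove_of_le_castSucc i.castSucc _ (by simpa using h.le), Fin.succAbove_of_le_castSucc _ _ (by rw [Fin.lt_def] at h; rw [Fin.le_def]; simp; omega)]
        rw [hσ, Equiv.swap_apply_of_ne_of_ne]
        · intro h'; rw [Fin.ext_iff] at h'; rw [Fin.lt_def] at h; simp at h'; omega
        · simpa using h.ne'
    rw [this]
    simp [pow_succ]
  · have h3 : σ j = j := Equiv.swap_apply_of_ne_of_ne h1 h2
    rw [h3]
    obtain ⟨l, hl⟩ := Fin.exists_succAbove_eq (Ne.symm h1)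
    obtain ⟨l', hl'⟩ := Fin.exists_succAbove_eq (Ne.symm h2)
    have hll : l ≠ l' := by rintro rfl; exact hii (hl.symm.trans hl')
    have : (v ∘ σ) ∘ j.succAbove = (v ∘ j.succAbove) ∘ Equiv.swap l l' := by
      rw [hσ, ← hl, ← hl', Function.comp_assoc, Function.comp_assoc, Function.Injective.swap_comp Fin.succAbove_right_injective]
    rw [this, ha _ (hv.comp _), Equiv.Perm.sign_swap hll]
    simp

lemma alt_cod {k : ℕ} {a : (Fin k → Vx p ι) → ZMod p} (ha : alt r a) : alt r (cod a) := by
  intro v hv σ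
  have hσ : σ ∈ Submonoid.closure (Set.range fun i : Fin k ↦ Equiv.swap i.castSucc i.succ) := by
    rw [Equiv.Perm.mclosure_swap_castSucc_succ]; trivial
  induction hσ using Submonoid.closure_induction generalizing v with
  | mem x hx =>
    obtain ⟨i, rfl⟩ := hx
    rw [cod_swap ha v hv, Equiv.Perm.sign_swap (Fin.castSucc_lt_succ).ne]
    simp
  | one => simp
  | mul x y _ _ hx hy =>
    rw [Equiv.Perm.coe_mul, ← Function.comp_assoc, hy _ (hv.comp _), hx _ hv]
    simp; ring

structure St (r : Vx p ι → Vx p ι → Prop) (k : ℕ) (a : (Fin k → Vx p ι) → ZMod p) (e : Bool) : Prop where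
  halt : alt r a
  closed : ∀ v, good r v → cod a v = 0
  van : ∀ v, good r v → ¬ free v → a v = 0
  op : ∀ v, good r v → opC (!e) (sh p ι) a v = 0

lemma St.solve (hr : IsRel r) {k : ℕ} {a : (Fin k → Vx p ι) → ZMod p} {e : Bool} (h : St r k a e) :
    ∃ b : (Fin k → Vx p ι) → ZMod p, alt r b ∧ (∀ v, good r v → ¬ free v → b v = 0) ∧
      ∀ v, good r v → opC e (sh p ι) b v = a v := by
  classical
  cases e with
  | false =>
    have hop : ∀ v, good r v → a (sh p ι ∘ v) = a v := fun v hv => sub_eq_zero.1 (h.op v hv)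
    have hop' : ∀ (i : ℕ) v, good r v → a ((sh p ι)^[i] ∘ v) = a v := by
      intro i
      induction i with
      | zero => intro v _; rfl
      | succ i ih =>
        intro v hv
        rw [Function.iterate_succ', Function.comp_assoc, hop _ (hv.sh_iter hr i), ih v hv]
    refine ⟨fun v => if free v ∧ lab v = 0 then a v else 0, ?_, ?_, ?_⟩
    · intro v hv σ
      simp only [free_perm, lab_perm]
      split_ifs
      · exact h.halt v hv σ
      · simp
    · intro v hv hf
      simp [hf]
    · intro v hv
      by_cases hf : free v
      · simp only [opC, free_iter, hf, true_and]
        have hlt : (-(lab v)).val < p := ZMod.val_lt _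
        rw [Finset.sum_eq_single (-(lab v)).val]
        · rw [lab_iter hr hv hf, ZMod.natCast_zmod_val, if_pos (by ring), hop' _ v hv]
        · intro i hi hne
          rw [lab_iter hr hv hf, if_neg]
          intro h0
          apply hne
          rw [← eq_neg_iff_add_eq_zero.2 ((add_comm _ _).trans h0), ZMod.val_natCast, Nat.mod_eq_of_lt (Finset.mem_range.1 hi)]
        · intro hni
          exact absurd (Finset.mem_range.2 hlt) hni
      · simp only [opC, free_iter, hf, false_and, if_false, Finset.sum_const_zero]
        exact (h.van v hv hf).symm
  | true =>
    have hop : ∀ v, good r v → ∑ i ∈ Finset.range p, a ((sh p ι)^[i] ∘ v) = 0 := fun v hv => h.op v hv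
    refine ⟨fun v => if free v then ∑ i ∈ Finset.range (lab v).val, a ((sh p ι)^[i] ∘ ((sh p ι)^[p - (lab v).val] ∘ v)) else 0, ?_, ?_, ?_⟩
    · intro v hv σ
      simp only [free_perm, lab_perm]
      split_ifs
      · rw [Finset.mul_sum]
        refine Finset.sum_congr rfl fun i _ => ?_
        exact h.halt _ ((hv.sh_iter hr _).sh_iter hr _) σ
      · simp
    · intro v hv hf
      simp [hf]
    · intro v hv
      by_cases hf : free v
      · simp only [opC, free_sh, hf, if_true, lab_sh hr hv hf]
        have hlt : (lab v).val < p := ZMod.val_lt _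
        have hp1 : 1 < p := hp.out.one_lt
        haveI : Fact (1 < p) := ⟨hp1⟩
        by_cases hl : (lab v).val + 1 < p
        · have h1 : (lab v + 1).val = (lab v).val + 1 := by
            rw [ZMod.val_add, ZMod.val_one, Nat.mod_eq_of_lt hl]
          rw [h1, Finset.sum_range_succ]
          have h2 : (sh p ι)^[p - ((lab v).val + 1)] ∘ (sh p ι ∘ v) = (sh p ι)^[p - (lab v).val] ∘ v := by
            rw [← Function.comp_assoc, ← Function.iterate_succ]
            congr 2; omega
          rw [h2, add_sub_cancel_left, ← Function.comp_assoc, ← Function.iterate_add]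
          rw [show (lab v).val + (p - (lab v).val) = p by omega, sh_iter_p]
          rfl
        · have h1 : (lab v + 1).val = 0 := by
            rw [ZMod.val_add, ZMod.val_one, show (lab v).val + 1 = p by omega, Nat.mod_self]
          rw [h1, Finset.range_zero, Finset.sum_empty, zero_sub, show p - (lab v).val = 1 by omega, Function.iterate_one]
          have h3 := hop _ (hv.sh hr)
          rw [show Finset.range p = Finset.range ((lab v).val + 1) by congr 1; omega, Finset.sum_range_succ] at h3
          rw [← Function.comp_assoc _ _ v, ← Function.iterate_succ, show (lab v).val.succ = p by omega, sh_iter_p] at h3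
          rw [neg_eq_iff_add_eq_zero]
          exact h3
      · simp only [opC, free_sh, hf, if_false, sub_zero]
        exact (h.van v hv hf).symm

lemma cod_zero_of {k : ℕ} {a b : (Fin k → Vx p ι) → ZMod p} (h : ∀ v, good r v → a v = b v) (v) (hv : good r v) :
    cod a v = cod b v := by
  unfold cod
  refine Finset.sum_congr rfl fun i _ => ?_
  rw [h _ (hv.comp _)]

lemma St.step (hr : IsRel r) {k : ℕ} {a : (Fin k → Vx p ι) → ZMod p} {e : Bool} (h : St r k a e) :
    ∃ b : (Fin k → Vx p ι) → ZMod p, (∀ v, good r v → opC e (sh p ι) b v = a v) ∧ St r (k+1) (cod b) (!e) := by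
  obtain ⟨b, h1, h2, h3⟩ := h.solve hr
  refine ⟨b, h3, alt_cod h1, ?_, ?_, ?_⟩
  · intro v hv; rw [cod_cod]; rfl
  · intro v hv hf
    unfold cod
    refine Finset.sum_eq_zero fun i _ => ?_
    rw [h2 _ (hv.comp _), mul_zero]
    rintro ⟨j, hj⟩
    exact hf ⟨_, hj⟩
  · intro v hv
    rw [Bool.not_not, opC_cod, cod_zero_of h3 v hv]
    exact h.closed v hv

lemma alt_vanish (hr : IsRel r) (hp2 : p ≠ 2) {k : ℕ} {a : (Fin k → Vx p ι) → ZMod p} (ha : alt r a)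
    (hk : Fintype.card (ι ⊕ Bool) < k) (v) (hv : good r v) : a v = 0 := by
  obtain ⟨i, j, hij, h⟩ := Fintype.exists_ne_map_eq_of_card_lt
    (fun i : Fin k => (Sum.map Prod.fst id (v i) : ι ⊕ Bool)) (by simpa using hk)
  have hvv : v i = v j := by
    have hg := hv i j
    cases h1 : v i with
    | inl x =>
      cases h2 : v j with
      | inl y =>
        rw [h1, h2] at h hg
        simp at h
        obtain ⟨x1, x2⟩ := x
        obtain ⟨y1, y2⟩ := y
        simp at h
        subst h
        rw [hr.h1 _ _ _ hg]
      | inr y => rw [h1, h2] at h; simp at h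
    | inr x =>
      cases h2 : v j with
      | inl y => rw [h1, h2] at h; simp at h
      | inr y => rw [h1, h2] at hg; rw [hr.h2 _ _ hg]
  have := ha v hv (Equiv.swap i j)
  have h2 : v ∘ Equiv.swap i j = v := by
    funext l
    simp only [Function.comp_apply, Equiv.swap_apply_def]
    split_ifs with h1 h2
    · rw [h1, hvv]
    · rw [h2, hvv]
    · rfl
  rw [h2, Equiv.Perm.sign_swap hij] at this
  have h3 : (2 : ZMod p) * a v = 0 := by
    rw [two_mul]; nth_rewrite 1 [this]; simp
  rcases mul_eq_zero.1 h3 with h4 | h4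
  · exfalso
    have : ((2:ℕ) : ZMod p) = 0 := by exact_mod_cast h4
    rw [ZMod.natCast_eq_zero_iff] at this
    exact hp2 ((Nat.prime_dvd_prime_iff_eq hp.out Nat.prime_two).1 this)
  · exact h4

end Coch
end Smith


set_option linter.unusedSectionVars false
set_option linter.style.longLine false
namespace Smith
section Rep
variable {p : ℕ} [hp : Fact p.Prime] {ι : Type} [LinearOrder ι] [Fintype ι]
variable {E : Type*} [NormedAddCommGroup E] [NormedSpace ℝ E] [ProperSpace E]
variable {r : Vx p ι → Vx p ι → Prop}

/-- the operators `T - 1` and `N` on chains -/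
noncomputable def opX {X : Type*} (e : Bool) (h : X → X) (k : ℕ) : Chain (ZMod p) X k →ₗ[ZMod p] Chain (ZMod p) X k :=
  match e with
  | true => cmap (ZMod p) h k - LinearMap.id
  | false => ∑ i ∈ Finset.range p, cmap (ZMod p) h^[i] k

lemma opX_bd {X : Type*} (e : Bool) (h : X → X) (k : ℕ) (c : Chain (ZMod p) X (k+1)) :
    bd (ZMod p) X k (opX e h (k+1) c) = opX e h k (bd (ZMod p) X k c) := by
  cases e
  · simp [opX, cmap_bd]
  · simp [opX, cmap_bd]

lemma opX_opX {X : Type*} (e : Bool) (h : X → X) (hh : h^[p] = id) (k : ℕ) (c : Chain (ZMod p) X k) :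
    opX (!e) h k (opX e h k c) = 0 := by
  have h1 : ∀ c : Chain (ZMod p) X k, ∑ i ∈ Finset.range p, cmap (ZMod p) h^[i+1] k c = ∑ i ∈ Finset.range p, cmap (ZMod p) h^[i] k c := by
    intro c
    have := Finset.sum_range_succ' (fun i => cmap (ZMod p) h^[i] k c) p
    rw [Finset.sum_range_succ, hh] at this
    simpa using this.symm
  cases e
  · simp only [opX, Bool.not_false, LinearMap.sub_apply, LinearMap.id_apply, LinearMap.sum_apply, map_sum, cmap_comp,
      ← Function.iterate_succ']
    rw [Finset.sum_sub_distrib]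
    exact sub_eq_zero.2 (h1 c)
  · simp only [opX, Bool.not_true, LinearMap.sub_apply, LinearMap.id_apply, LinearMap.sum_apply, map_sub, cmap_comp,
      ← Function.iterate_succ]
    exact sub_eq_zero.2 (h1 c)

lemma pair_opX {X : Type*} (e : Bool) (h : X → X) (k : ℕ) (c : Chain (ZMod p) X k) (b : (Fin k → X) → ZMod p) :
    pair b (opX e h k c) = pair (opC e h b) c := by
  have : (pair b) ∘ₗ (opX e h k) = pair (opC e h b) := by
    apply chain_ext
    intro v
    cases e
    · simp [opX, opC, cmap_single, pair_single]
    · simp [opX, opC, cmap_single, pair_single]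
  exact LinearMap.congr_fun this c

structure Valid (h : E → E) (r : Vx p ι → Vx p ι → Prop) (Q : (E → Vx p ι) → Prop) (ε R : ℝ) (lam : E → Vx p ι) : Prop where
  eqv : ∀ x, lam (h x) = sh p ι (lam x)
  rel : ∀ x y, ‖x‖ ≤ R → ‖y‖ ≤ R → dist x y < ε → r (lam x) (lam y)
  q : Q lam

def Rep (h : E → E) (r : Vx p ι → Vx p ι → Prop) (Q : (E → Vx p ι) → Prop) (k : ℕ)
    (a : (Fin (k+1) → Vx p ι) → ZMod p) (e : Bool) : Prop :=
  ∃ R : ℝ, 0 ≤ R ∧ ∀ ε > 0, ∃ c : Chain (ZMod p) E (k+1), c ∈ Finsupp.supported (ZMod p) (ZMod p) (small E (k+1) ε R) ∧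
    opX e h k (bd (ZMod p) E k c) = 0 ∧ ∀ lam, Valid h r Q ε R lam → pair (fun v => a (lam ∘ v)) c = 1

lemma lam_iter {h : E → E} {lam : E → Vx p ι} (H : ∀ x, lam (h x) = sh p ι (lam x)) (i : ℕ) (x : E) :
    lam (h^[i] x) = (sh p ι)^[i] (lam x) := by
  induction i with
  | zero => rfl
  | succ i ih => rw [Function.iterate_succ_apply', H, ih, Function.iterate_succ_apply']

lemma opC_comp {h : E → E} {lam : E → Vx p ι} (H : ∀ x, lam (h x) = sh p ι (lam x)) (e : Bool) {k : ℕ}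
    (b : (Fin k → Vx p ι) → ZMod p) :
    opC e h (fun v => b (lam ∘ v)) = fun v => opC e (sh p ι) b (lam ∘ v) := by
  funext v
  cases e
  · simp only [opC]
    refine Finset.sum_congr rfl fun i _ => ?_
    congr 1
    funext j
    exact lam_iter H i _
  · simp only [opC]
    congr 2
    funext j
    exact H _

lemma cod_comp {X Y : Type*} {k : ℕ} (f : X → Y) (b : (Fin k → Y) → ZMod p) :
    (fun v : Fin (k+1) → X => cod b (f ∘ v)) = cod (fun v => b (f ∘ v)) := rfl

lemma unif {h : E → E} (hc : Continuous h) (p : ℕ) (R : ℝ) : (∃ R', R ≤ R' ∧ ∀ i < p, ∀ x, ‖x‖ ≤ R → ‖h^[i] x‖ ≤ R') ∧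
    ∀ ε > 0, ∃ δ > 0, δ ≤ ε ∧ ∀ x y, ‖x‖ ≤ R → ‖y‖ ≤ R → dist x y < δ → ∀ i < p, dist (h^[i] x) (h^[i] y) < ε := by
  let Φ : E → (Fin p → E) := fun x i => h^[i] x
  have hΦ : Continuous Φ := continuous_pi fun i => hc.iterate i
  have hK : IsCompact (Metric.closedBall (0:E) R) := isCompact_closedBall 0 R
  constructor
  · obtain ⟨C, hC⟩ := hK.exists_bound_of_continuousOn hΦ.continuousOn
    refine ⟨max R C, le_max_left _ _, fun i hi x hx => ?_⟩
    exact (norm_le_pi_norm (Φ x) ⟨i, hi⟩).trans ((hC x (by simpa using hx)).trans (le_max_right _ _))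
  · intro ε hε
    have hu := hK.uniformContinuousOn_of_continuous hΦ.continuousOn
    rw [Metric.uniformContinuousOn_iff] at hu
    obtain ⟨δ, hδ, H⟩ := hu ε hε
    refine ⟨min δ ε, lt_min hδ hε, min_le_right _ _, fun x y hx hy hxy i hi => ?_⟩
    exact (dist_le_pi_dist (Φ x) (Φ y) ⟨i, hi⟩).trans_lt
      (H x (by simpa using hx) y (by simpa using hy) (hxy.trans_le (min_le_left _ _)))

lemma opX_small {h : E → E} {k : ℕ} {R R' δ ε : ℝ} (hRR : R ≤ R') (hR' : ∀ i < p, ∀ x, ‖x‖ ≤ R → ‖h^[i] x‖ ≤ R') (hδε : δ ≤ ε)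
    (hδ : ∀ x y, ‖x‖ ≤ R → ‖y‖ ≤ R → dist x y < δ → ∀ i < p, dist (h^[i] x) (h^[i] y) < ε) (e : Bool)
    {c : Chain (ZMod p) E k} (hc : c ∈ Finsupp.supported (ZMod p) (ZMod p) (small E k δ R)) :
    opX e h k c ∈ Finsupp.supported (ZMod p) (ZMod p) (small E k ε R') := by
  have key : ∀ i < p, cmap (ZMod p) h^[i] k c ∈ Finsupp.supported (ZMod p) (ZMod p) (small E k ε R') := by
    intro i hi
    refine map_supported _ ?_ hc
    intro v hv
    rw [cmap_single]
    refine single_supported ⟨fun j => hR' i hi _ (hv.1 j), fun j l => hδ _ _ (hv.1 j) (hv.1 l) (hv.2 j l) i hi⟩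
  cases e
  · simp only [opX, LinearMap.sum_apply]
    exact Submodule.sum_mem _ fun i hi => key i (Finset.mem_range.1 hi)
  · simp only [opX, LinearMap.sub_apply, LinearMap.id_apply]
    exact Submodule.sub_mem _ (key 1 hp.out.one_lt) (Finsupp.supported_mono (small_mono hδε hRR) hc)

lemma Rep.step {h : E → E} (hc : Continuous h) (hh : h^[p] = id) {Q : (E → Vx p ι) → Prop} {k : ℕ}
    {a : (Fin (k+1) → Vx p ι) → ZMod p} {e : Bool} (H : Rep h r Q k a e)
    {b : (Fin (k+1) → Vx p ι) → ZMod p} (hb : ∀ v, good r v → opC e (sh p ι) b v = a v) :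
    Rep h r Q (k+1) (cod b) (!e) := by
  obtain ⟨R, hR, H⟩ := H
  obtain ⟨⟨R', hRR, hR'⟩, hu⟩ := unif hc p R
  refine ⟨R', hR.trans hRR, fun ε hε => ?_⟩
  obtain ⟨δ, hδ, hδε, hδ'⟩ := hu (ε/2) (by positivity)
  obtain ⟨c, hcs, hcyc, hcp⟩ := H δ hδ
  have hzs := opX_small (p := p) hRR hR' hδε hδ' e hcs
  obtain ⟨w, hw, hwz⟩ := fill (F := ZMod p) (half_pos hε) (hR.trans hRR) (half_lt_self hε) _ hzs (by rw [opX_bd, hcyc])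
  refine ⟨w, hw, ?_, ?_⟩
  · rw [hwz, opX_opX _ _ hh]
  · intro lam hl
    rw [cod_comp, pair_cod, hwz, pair_opX, opC_comp hl.eqv]
    have hl' : Valid h r Q δ R lam := ⟨hl.eqv, fun x y hx hy hxy => hl.rel x y (hx.trans hRR) (hy.trans hRR)
      (hxy.trans_le (by linarith)), hl.q⟩
    rw [← hcp lam hl']
    refine pair_congr hcs fun v hv => ?_
    exact hb _ fun i j => hl'.rel _ _ (hv.1 i) (hv.1 j) (hv.2 i j)

lemma contra {h : E → E} (hp2 : p ≠ 2) (hc : Continuous h) (hh : h^[p] = id) {Q : (E → Vx p ι) → Prop} (hr : IsRel r)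
    {k : ℕ} {a : (Fin (k+1) → Vx p ι) → ZMod p} {e : Bool} (hS : St r (k+1) a e) (hR : Rep h r Q k a e)
    (hlam : ∀ R : ℝ, 0 ≤ R → ∃ ε > 0, ∃ lam, Valid h r Q ε R lam) : False := by
  have key : ∀ j : ℕ, ∃ e, ∃ a : (Fin (k+j+1) → Vx p ι) → ZMod p, St r (k+j+1) a e ∧ Rep h r Q (k+j) a e := by
    intro j
    induction j with
    | zero => exact ⟨e, a, hS, hR⟩
    | succ j ih =>
      obtain ⟨e, a, h1, h2⟩ := ih
      obtain ⟨b, hb, hb'⟩ := h1.step hr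
      exact ⟨!e, cod b, hb', h2.step hc hh hb⟩
  obtain ⟨e, a, h1, R, hR0, h2⟩ := key (Fintype.card (ι ⊕ Bool))
  obtain ⟨ε, hε, lam, hl⟩ := hlam R hR0
  obtain ⟨c, hcs, -, hc1⟩ := h2 ε hε
  have h3 := hc1 lam hl
  rw [pair_congr (b := fun _ => 0) hcs] at h3
  · simp [pair, Finsupp.linearCombination_apply] at h3
  · intro v hv
    exact alt_vanish hr hp2 h1.halt (by omega) _ fun i j => hl.rel _ _ (hv.1 i) (hv.1 j) (hv.2 i j)

end Rep
end Smith


set_option linter.unusedSectionVars false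
set_option linter.style.longLine false
namespace Smith
section Lam
variable {p : ℕ} [hp : Fact p.Prime] {n : ℕ} {h : EuclideanSpace ℝ (Fin n) → EuclideanSpace ℝ (Fin n)}

/-- orbit coordinates -/
def co (p : ℕ) (h : EuclideanSpace ℝ (Fin n) → EuclideanSpace ℝ (Fin n)) (x : EuclideanSpace ℝ (Fin n)) (i : Fin n) (k : ZMod p) : ℝ :=
  (h^[k.val] x) i

lemma co_h (hh : h^[p] = id) (x : EuclideanSpace ℝ (Fin n)) (i : Fin n) (k : ZMod p) :
    co p h (h x) i k = co p h x i (k+1) := by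
  unfold co
  rw [← Function.iterate_succ_apply]
  have h1 : (k+1).val = (k.val + 1) % p := by
    rw [ZMod.val_add, ZMod.val_one]
  have h2 : Function.IsPeriodicPt h p x := by
    rw [Function.IsPeriodicPt, hh]; rfl
  rw [h1, h2.iterate_mod_apply]

def gap (h : EuclideanSpace ℝ (Fin n) → EuclideanSpace ℝ (Fin n)) (η : ℝ) (x : EuclideanSpace ℝ (Fin n)) (i : Fin n) (S : Finset (ZMod p)) : Prop :=
  ∀ k l : ZMod p, k ∈ S → l ∉ S → co p h x i l + η < co p h x i k

lemma gap_unique {η : ℝ} (hη : 0 ≤ η) {x : EuclideanSpace ℝ (Fin n)} {i : Fin n} {S S' : Finset (ZMod p)}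
    (h1 : gap h η x i S) (h2 : gap h η x i S') (hc : S.card = S'.card) : S = S' := by
  by_contra hne
  have a1 : ¬ S ⊆ S' := fun hs => hne (Finset.eq_of_subset_of_card_le hs hc.ge)
  have a2 : ¬ S' ⊆ S := fun hs => hne (Finset.eq_of_subset_of_card_le hs hc.le).symm
  obtain ⟨k, hk, hk'⟩ := Finset.not_subset.1 a1
  obtain ⟨l, hl, hl'⟩ := Finset.not_subset.1 a2
  have := h1 k l hk hl'
  have := h2 l k hl hk'
  linarith

lemma gap_mono {η η' : ℝ} (hη : η' ≤ η) {x : EuclideanSpace ℝ (Fin n)} {i : Fin n} {S : Finset (ZMod p)}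
    (h1 : gap h η x i S) : gap h η' x i S := fun k l hk hl => by
  have := h1 k l hk hl; linarith

lemma gap_close {η η' δ : ℝ} {x y : EuclideanSpace ℝ (Fin n)} (hd : ∀ i < p, dist (h^[i] x) (h^[i] y) < δ) (hη : η' + 2 * δ ≤ η)
    {i : Fin n} {S : Finset (ZMod p)} (h1 : gap h η x i S) : gap h η' y i S := fun k l hk hl => by
  have h2 := h1 k l hk hl
  have key : ∀ k : ZMod p, |co p h x i k - co p h y i k| < δ := by
    intro k
    refine lt_of_le_of_lt ?_ (hd k.val (ZMod.val_lt k))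
    rw [dist_eq_norm]
    exact PiLp.norm_apply_le (h^[k.val] x - h^[k.val] y) i
  have h3 := abs_lt.1 (key k)
  have h4 := abs_lt.1 (key l)
  linarith

def cls (p : ℕ) (h : EuclideanSpace ℝ (Fin n) → EuclideanSpace ℝ (Fin n)) (η : ℝ) (x : EuclideanSpace ℝ (Fin n)) (c : Fin n ×ₗ Fin p) : Prop :=
  ∃ S : Finset (ZMod p), S.card = ((ofLex c).2 : ℕ) ∧ 0 < ((ofLex c).2 : ℕ) ∧ gap h η x (ofLex c).1 S

def shS (S : Finset (ZMod p)) : Finset (ZMod p) := S.image (fun k => k - 1)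

lemma mem_shS {S : Finset (ZMod p)} {k} : k ∈ shS S ↔ k + 1 ∈ S := by
  simp [shS, sub_eq_iff_eq_add]

lemma card_shS (S : Finset (ZMod p)) : (shS S).card = S.card :=
  Finset.card_image_of_injective _ (fun a b h => by simpa using h)

lemma sum_shS (S : Finset (ZMod p)) : ∑ k ∈ shS S, k = ∑ k ∈ S, k - S.card := by
  rw [shS, Finset.sum_image (fun a _ b _ h => by simpa using h)]
  simp

lemma gap_shS (hh : h^[p] = id) {η : ℝ} {x : EuclideanSpace ℝ (Fin n)} {i : Fin n} {S : Finset (ZMod p)} (h1 : gap h η x i S) :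
    gap h η (h x) i (shS S) := fun k l hk hl => by
  rw [co_h hh, co_h hh]
  rw [mem_shS] at hk hl
  exact h1 _ _ hk hl

lemma cls_h (hh : h^[p] = id) {η : ℝ} {x : EuclideanSpace ℝ (Fin n)} {c : Fin n ×ₗ Fin p} (H : cls p h η x c) : cls p h η (h x) c := by
  obtain ⟨S, h1, h2, h3⟩ := H
  exact ⟨shS S, by rw [card_shS, h1], h2, gap_shS hh h3⟩

lemma cls_h_iff (hh : h^[p] = id) (η : ℝ) (x : EuclideanSpace ℝ (Fin n)) : cls p h η (h x) = cls p h η x := by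
  funext c
  refine propext ⟨fun H => ?_, cls_h hh⟩
  have key : ∀ i : ℕ, cls p h η (h^[i] (h x)) c := by
    intro i
    induction i with
    | zero => exact H
    | succ i ih => rw [Function.iterate_succ_apply']; exact cls_h hh ih
  have := key (p-1)
  rw [← Function.iterate_succ_apply, Nat.succ_eq_add_one, Nat.sub_add_cancel hp.out.one_le, hh] at this
  exact this

noncomputable def Sof (h : EuclideanSpace ℝ (Fin n) → EuclideanSpace ℝ (Fin n)) (η : ℝ) (x : EuclideanSpace ℝ (Fin n)) (c : Fin n ×ₗ Fin p) : Finset (ZMod p) :=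
  Classical.epsilon fun S => S.card = ((ofLex c).2 : ℕ) ∧ 0 < ((ofLex c).2 : ℕ) ∧ gap h η x (ofLex c).1 S

lemma Sof_spec {η : ℝ} {x : EuclideanSpace ℝ (Fin n)} {c : Fin n ×ₗ Fin p} (H : cls p h η x c) :
    (Sof h η x c).card = ((ofLex c).2 : ℕ) ∧ 0 < ((ofLex c).2 : ℕ) ∧ gap h η x (ofLex c).1 (Sof h η x c) :=
  Classical.epsilon_spec H

open Classical in
noncomputable def lam (h : EuclideanSpace ℝ (Fin n) → EuclideanSpace ℝ (Fin n)) (f : EuclideanSpace ℝ (Fin n) → ℝ) (η : ℝ) (x : EuclideanSpace ℝ (Fin n)) :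
    Vx p (Fin n ×ₗ Fin p) :=
  if H : ∃ c, cls p h η x c then
    .inl (Classical.choose H, - ((((ofLex (Classical.choose H)).2 : ℕ) : ZMod p)⁻¹ * ∑ k ∈ Sof h η x (Classical.choose H), k))
  else .inr (decide (0 ≤ f x))

lemma choose_congr {α : Type*} {P Q : α → Prop} (e : P = Q) (H : ∃ c, P c) (H' : ∃ c, Q c) :
    Classical.choose H = Classical.choose H' := by
  subst e; rfl

lemma lam_h (hh : h^[p] = id) {f : EuclideanSpace ℝ (Fin n) → ℝ} (hf : ∀ x, f (h x) = f x) {η : ℝ} (hη : 0 ≤ η) (x : EuclideanSpace ℝ (Fin n)) :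
    lam (p := p) h f η (h x) = sh p _ (lam h f η x) := by
  by_cases H : ∃ c, cls p h η x c
  · have H' : ∃ c, cls p h η (h x) c := by rwa [cls_h_iff hh]
    rw [lam, lam, dif_pos H, dif_pos H', choose_congr (cls_h_iff hh η x) H' H]
    have hc := Classical.choose_spec H
    generalize Classical.choose H = c at hc
    obtain ⟨a1, a2, a3⟩ := Sof_spec hc
    obtain ⟨b1, b2, b3⟩ := Sof_spec (cls_h hh hc)
    have e : Sof h η (h x) c = shS (Sof h η x c) :=
      gap_unique hη b3 (gap_shS hh a3) (by rw [card_shS, a1, b1])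
    simp only [sh, Sum.map_inl, Sum.inl.injEq, Prod.mk.injEq, true_and]
    rw [e, sum_shS, a1]
    have : (((ofLex c).2 : ℕ) : ZMod p) ≠ 0 := by
      rw [Ne, ZMod.natCast_eq_zero_iff]
      exact Nat.not_dvd_of_pos_of_lt a2 (ofLex c).2.2
    field_simp
    ring
  · have H' : ¬ ∃ c, cls p h η (h x) c := by rwa [cls_h_iff hh]
    rw [lam, lam, dif_neg H, dif_neg H', hf]
    rfl

lemma exists_gap {x : EuclideanSpace ℝ (Fin n)} (hx : h x ≠ x) : ∃ η > 0, ∃ c, cls p h η x c := by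
  have : ∃ i, (h x) i ≠ x i := by
    by_contra! H
    exact hx (by ext i; exact H i)
  obtain ⟨i, hi⟩ := this
  obtain ⟨k0, -, hk0⟩ := Finset.exists_max_image Finset.univ (co p h x i) Finset.univ_nonempty
  set S : Finset (ZMod p) := Finset.univ.filter fun k => co p h x i k = co p h x i k0 with hS
  have hlt : S.card < p := by
    refine lt_of_lt_of_eq (Finset.card_lt_card (Finset.ssubset_univ_iff.2 fun H => ?_)) (by rw [Finset.card_univ, ZMod.card])
    have h0 : (0 : ZMod p) ∈ S := by rw [H]; exact Finset.mem_univ _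
    have h1 : (1 : ZMod p) ∈ S := by rw [H]; exact Finset.mem_univ _
    simp only [hS, Finset.mem_filter, Finset.mem_univ, true_and] at h0 h1
    apply hi
    have := h1.trans h0.symm
    simpa [co, ZMod.val_one] using this
  have hpos : 0 < S.card := Finset.card_pos.2 ⟨k0, by simp [hS]⟩
  have hne : (Sᶜ).Nonempty := by
    rw [← Finset.card_pos, Finset.card_compl, ZMod.card]; omega
  obtain ⟨l0, hl0, hl⟩ := Finset.exists_max_image Sᶜ (co p h x i) hne
  have hlt' : co p h x i l0 < co p h x i k0 := by
    refine lt_of_le_of_ne (hk0 _ (Finset.mem_univ _)) ?_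
    simpa [hS] using hl0
  refine ⟨(co p h x i k0 - co p h x i l0)/2, by linarith, toLex (i, ⟨S.card, hlt⟩), S, rfl, hpos, ?_⟩
  intro k l hk hl'
  have e : co p h x i k = co p h x i k0 := by simpa [hS] using hk
  have := hl l (by simpa using hl')
  show co p h x i l + _ < co p h x i k
  linarith

lemma cls_fix {η : ℝ} (hη : 0 ≤ η) {x : EuclideanSpace ℝ (Fin n)} (hx : h x = x) (c) : ¬ cls p h η x c := by
  rintro ⟨S, h1, h2, h3⟩
  have hlt : S.card < p := h1 ▸ (ofLex c).2.2
  obtain ⟨k, hk⟩ : S.Nonempty := Finset.card_pos.1 (h1 ▸ h2)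
  have hne : (Sᶜ).Nonempty := by
    rw [← Finset.card_pos, Finset.card_compl, ZMod.card]; omega
  obtain ⟨l, hl⟩ := hne
  have := h3 k l hk (by simpa using hl)
  simp only [co, Function.iterate_fixed hx] at this
  linarith

lemma cls_open (hc : Continuous h) (η : ℝ) (c) : IsOpen {x | cls p h η x c} := by
  have : {x | cls p h η x c} = ⋃ S : Finset (ZMod p), ⋃ (_ : S.card = ((ofLex c).2 : ℕ) ∧ 0 < ((ofLex c).2 : ℕ)), ⋂ k : ZMod p, ⋂ l : ZMod p, ⋂ (_ : k ∈ S ∧ l ∉ S),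
      {x | co p h x (ofLex c).1 l + η < co p h x (ofLex c).1 k} := by
    ext x
    simp only [cls, gap, Set.mem_setOf_eq, Set.mem_iUnion, Set.mem_iInter, exists_prop, and_assoc, and_imp]
  rw [this]
  have hco : ∀ k, Continuous fun x => co p h x (ofLex c).1 k := by
    intro k
    unfold co
    have := hc.iterate k.val
    fun_prop
  refine isOpen_iUnion fun S => isOpen_iUnion fun _ => isOpen_iInter_of_finite fun k => isOpen_iInter_of_finite fun l => isOpen_iInter_of_finite fun _ =>
    isOpen_lt ((hco l).add continuous_const) (hco k)

def r0 {ι : Type} : Vx p ι → Vx p ι → Prop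
  | .inl (c, l), .inl (c', l') => c = c' → l = l'
  | .inr b, .inr b' => b = b'
  | _, _ => True

lemma exists_lam (hc : Continuous h) (hh : h^[p] = id) {f : EuclideanSpace ℝ (Fin n) → ℝ} (hfc : Continuous f) (hf : ∀ x, f (h x) = f x)
    (hf0 : ∀ x, h x = x → f x ≠ 0) (R : ℝ) :
    ∃ ε > 0, ∃ L : EuclideanSpace ℝ (Fin n) → Vx p (Fin n ×ₗ Fin p), (∀ x, L (h x) = sh p _ (L x)) ∧
      (∀ x y, ‖x‖ ≤ R → ‖y‖ ≤ R → dist x y < ε → r0 (L x) (L y)) ∧ (∀ x b, ‖x‖ ≤ R → L x = .inr b → f x ≠ 0) ∧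
      (∀ x, h x = x → L x = .inr (decide (0 ≤ f x))) := by
  have hK : IsCompact ({x | f x = 0} ∩ Metric.closedBall (0 : EuclideanSpace ℝ (Fin n)) R) :=
    (isCompact_closedBall _ _).inter_left (isClosed_eq hfc continuous_const)
  have hcls : ∀ {η η' : ℝ}, η' ≤ η → ∀ {x c}, cls p h η x c → cls p h η' x c := by
    rintro η η' hη x c ⟨S, h1, h2, h3⟩
    exact ⟨S, h1, h2, gap_mono hη h3⟩
  obtain ⟨m, hm⟩ := hK.elim_directed_cover (fun m : ℕ => {x | ∃ c, cls p h (2 * (1 / ((m : ℝ) + 1))) x c})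
    (fun m => by
      have : {x | ∃ c, cls p h (2 * (1 / ((m : ℝ) + 1))) x c} = ⋃ c, {x | cls p h (2 * (1 / ((m : ℝ) + 1))) x c} := by ext; simp
      rw [this]; exact isOpen_iUnion fun c => cls_open hc _ _)
    (fun x hx => by
      obtain ⟨η, hη, c, hcc⟩ := exists_gap (p := p) (fun hx' => hf0 x hx' hx.1)
      obtain ⟨m, hm⟩ := exists_nat_one_div_lt (half_pos hη)
      exact Set.mem_iUnion.2 ⟨m, c, hcls (by linarith) hcc⟩)
    (Monotone.directed_le (by
      intro m m' hmm x hx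
      obtain ⟨c, hx⟩ := hx
      refine ⟨c, hcls ?_ hx⟩
      have := one_div_le_one_div_of_le (by positivity : (0:ℝ) < (m:ℝ)+1) (by gcongr : (m:ℝ)+1 ≤ m' + 1)
      linarith))
  have hη : (0:ℝ) < 1 / ((m : ℝ) + 1) := by positivity
  generalize (1 / ((m : ℝ) + 1)) = η at hη hm
  obtain ⟨-, hu⟩ := unif hc p R
  obtain ⟨δ, hδ, -, hδ'⟩ := hu (η/2) (by positivity)
  refine ⟨δ, hδ, lam h f η, lam_h hh hf hη.le, ?_, ?_, ?_⟩
  · have side : ∀ x y, ‖x‖ ≤ R → ‖y‖ ≤ R → dist x y < δ → (¬ ∃ c, cls p h η x c) → (¬ ∃ c, cls p h η y c) → f x < 0 → 0 ≤ f y → False := by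
      intro x y hx hy hxy hnx hny h1 h2
      obtain ⟨z, hz, hz0⟩ := (convex_segment x y).isPreconnected.intermediate_value (left_mem_segment ℝ x y) (right_mem_segment ℝ x y) hfc.continuousOn ⟨h1.le, h2⟩
      have hzR : z ∈ Metric.closedBall (0 : EuclideanSpace ℝ (Fin n)) R :=
        (convex_closedBall _ _).segment_subset (by simpa using hx) (by simpa using hy) hz
      have hzx : dist z x < δ := (convex_ball x δ).segment_subset (Metric.mem_ball_self hδ) (by simpa [dist_comm] using hxy) hz
      obtain ⟨c, S, g1, g2, g3⟩ := hm ⟨hz0, hzR⟩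
      exact hnx ⟨c, S, g1, g2, gap_close (hδ' z x (by simpa using hzR) hx hzx) (by linarith) g3⟩
    intro x y hx hy hxy
    by_cases H : ∃ c, cls p h η x c <;> by_cases H' : ∃ c, cls p h η y c
    · rw [lam, lam, dif_pos H, dif_pos H']
      have c1 := Classical.choose_spec H
      have c2 := Classical.choose_spec H'
      generalize Classical.choose H = c at c1
      generalize Classical.choose H' = c' at c2
      intro e
      subst e
      obtain ⟨a1, a2, a3⟩ := Sof_spec c1
      obtain ⟨b1, b2, b3⟩ := Sof_spec c2
      have e : Sof h η x c = Sof h η y c := gap_unique le_rfl (gap_close (hδ' x y hx hy hxy) (by linarith) a3) (gap_mono hη.le b3) (by rw [a1, b1])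
      rw [e]
    · rw [lam, lam, dif_pos H, dif_neg H']; trivial
    · rw [lam, lam, dif_neg H, dif_pos H']; trivial
    · rw [lam, lam, dif_neg H, dif_neg H']
      show decide _ = decide _
      by_cases h1 : 0 ≤ f x <;> by_cases h2 : 0 ≤ f y
      · simp [h1, h2]
      · exact (side y x hy hx (by rwa [dist_comm]) H' H (not_le.1 h2) h1).elim
      · exact (side x y hx hy hxy H H' (not_le.1 h1) h2).elim
      · simp [h1, h2]
  · intro x b hx hb h0
    obtain ⟨c, hcc⟩ := hm ⟨h0, by simpa using hx⟩
    rw [lam, dif_pos ⟨c, hcls (by linarith) hcc⟩] at hb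
    cases hb
  · intro x hx
    rw [lam, dif_neg]
    push Not
    exact cls_fix hη.le hx

lemma r0_isRel {ι : Type} : IsRel (r0 (p := p) (ι := ι)) where
  hT := by
    rintro (⟨c, l⟩ | b) (⟨c', l'⟩ | b') H
    · intro e; exact congrArg (· + 1) (H e)
    · trivial
    · trivial
    · exact H
  h1 := fun c l l' H => H rfl
  h2 := fun b b' H => H

def r1 {ι : Type} (x y : Vx p ι) : Prop := r0 x y ∧ x.isLeft ∧ y.isLeft

lemma r1_isRel {ι : Type} : IsRel (r1 (p := p) (ι := ι)) where
  hT := by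
    intro x y H
    refine ⟨r0_isRel.hT x y H.1, ?_, ?_⟩
    · have := H.2.1; revert this; cases x <;> simp [sh]
    · have := H.2.2; revert this; cases y <;> simp [sh]
  h1 := fun c l l' H => H.1 rfl
  h2 := fun b b' H => H.1

theorem fix_nonempty (hp2 : p ≠ 2) (hc : Continuous h) (hh : h^[p] = id) : ∃ x, h x = x := by
  by_contra! hne
  have hlam : ∀ R : ℝ, 0 ≤ R → ∃ ε > 0, ∃ L : EuclideanSpace ℝ (Fin n) → Vx p (Fin n ×ₗ Fin p), Valid h r1 (fun _ => True) ε R L := by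
    intro R hR
    obtain ⟨ε, hε, L, h1, h2, h3, h4⟩ := exists_lam (p := p) (f := fun _ => 0) hc hh continuous_const (fun _ => rfl) (fun x hx => (hne x hx).elim) R
    refine ⟨ε, hε, L, h1, fun x y hx hy hxy => ⟨h2 x y hx hy hxy, ?_, ?_⟩, trivial⟩
    · cases e : L x with
      | inl => rfl
      | inr b => exact (h3 x b hx e rfl).elim
    · cases e : L y with
      | inl => rfl
      | inr b => exact (h3 y b hy e rfl).elim
  refine contra (k := 0) (a := fun _ => 1) (e := true) hp2 hc hh r1_isRel ?_ ?_ hlam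
  · refine ⟨?_, ?_, ?_, ?_⟩
    · intro v _ σ
      have : σ = 1 := Equiv.ext fun i => Subsingleton.elim (α := Fin 1) _ _
      simp [this]
    · intro v _
      simp [cod, Fin.sum_univ_succ]
    · intro v hv hf
      refine (hf ⟨0, ?_⟩).elim
      have := (hv 0 0).2.1
      revert this
      cases v 0 <;> simp
    · intro v _
      simp [opC]
  · refine ⟨0, le_rfl, fun ε hε => ⟨Finsupp.single (fun _ => 0) 1, single_supported ⟨by simp, by simp [hε]⟩, ?_, ?_⟩⟩
    · simp [opX, bd_single, cmap_single]
      rw [Subsingleton.elim (h ∘ _) _, sub_self]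
    · intro L _
      rw [pair_single]

theorem fix_preconnected (hp2 : p ≠ 2) (hc : Continuous h) (hh : h^[p] = id) : IsPreconnected {x | h x = x} := by
  have hcl : IsClosed {x | h x = x} := isClosed_eq hc continuous_id
  rw [isPreconnected_closed_iff]
  intro A0 B0 hA0 hB0 hsub ⟨a, ha, haA⟩ ⟨b, hb, hbB⟩
  by_contra hemp
  rw [Set.not_nonempty_iff_eq_empty] at hemp
  set A := {x | h x = x} ∩ A0
  set B := {x | h x = x} ∩ B0
  have hA : IsClosed A := hcl.inter hA0
  have hB : IsClosed B := hcl.inter hB0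
  have hdis : ∀ x, x ∈ A → x ∈ B → False := fun x h1 h2 => by
    have : x ∈ ({x | h x = x} ∩ (A0 ∩ B0)) := ⟨h1.1, h1.2, h2.2⟩
    rw [hemp] at this; exact this
  have haA : a ∈ A := ⟨ha, haA⟩
  have hbB : b ∈ B := ⟨hb, hbB⟩
  set f : EuclideanSpace ℝ (Fin n) → ℝ := fun x => ∑ k ∈ Finset.range p, (Metric.infDist (h^[k] x) A - Metric.infDist (h^[k] x) B) with hfdef
  have hfix : ∀ x, h x = x → f x = p * (Metric.infDist x A - Metric.infDist x B) := by
    intro x hx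
    simp [hfdef, Function.iterate_fixed hx, mul_sub]
  have hp0 : (0:ℝ) < p := by exact_mod_cast hp.out.pos
  have hfA : ∀ x ∈ A, f x < 0 := by
    intro x hx
    rw [hfix x hx.1, Metric.infDist_zero_of_mem hx]
    have := (hB.notMem_iff_infDist_pos ⟨b, hbB⟩).1 (fun hxB => hdis x hx hxB)
    nlinarith
  have hfB : ∀ x ∈ B, 0 < f x := by
    intro x hx
    rw [hfix x hx.1, Metric.infDist_zero_of_mem hx]
    have := (hA.notMem_iff_infDist_pos ⟨a, haA⟩).1 (fun hxB => hdis x hxB hx)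
    have : 0 < Metric.infDist x A - 0 := by linarith
    positivity
  have hfc : Continuous f := by
    refine continuous_finsetSum _ fun k _ => ?_
    exact ((Metric.continuous_infDist_pt A).comp (hc.iterate k)).sub ((Metric.continuous_infDist_pt B).comp (hc.iterate k))
  have hfh : ∀ x, f (h x) = f x := by
    intro x
    have := Finset.sum_range_succ' (fun k => (Metric.infDist (h^[k] x) A - Metric.infDist (h^[k] x) B)) p
    rw [Finset.sum_range_succ, hh] at this
    simp only [hfdef, ← Function.iterate_succ_apply]
    simpa using this.symm
  have hf0 : ∀ x, h x = x → f x ≠ 0 := by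
    intro x hx
    rcases hsub hx with h1 | h1
    · exact (hfA x ⟨hx, h1⟩).ne
    · exact (hfB x ⟨hx, h1⟩).ne'
  have hlam : ∀ R : ℝ, 0 ≤ R → ∃ ε > 0, ∃ L : EuclideanSpace ℝ (Fin n) → Vx p (Fin n ×ₗ Fin p),
      Valid h r0 (fun L => L a = .inr false ∧ L b = .inr true) ε R L := by
    intro R hR
    obtain ⟨ε, hε, L, h1, h2, h3, h4⟩ := exists_lam (p := p) hc hh hfc hfh hf0 R
    refine ⟨ε, hε, L, h1, h2, ?_, ?_⟩
    · rw [h4 a ha]; simp [hfA a haA]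
    · rw [h4 b hb]; simp [(hfB b hbB).le]
  classical
  set a0 : (Fin 1 → Vx p (Fin n ×ₗ Fin p)) → ZMod p := fun v => if v 0 = .inr true then 1 else 0 with ha0
  refine contra (k := 1) (a := cod a0) (e := true) hp2 hc hh r0_isRel ?_ ?_ hlam
  · refine ⟨?_, ?_, ?_, ?_⟩
    · refine alt_cod ?_
      intro v _ σ
      have : σ = 1 := Subsingleton.elim _ _
      simp [this]
    · intro v _
      rw [cod_cod]; rfl
    · intro v hv hf
      have key : v 0 = v 1 := by
        have h01 := hv 0 1
        cases e0 : v 0 with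
        | inl x => exact (hf ⟨0, x, e0⟩).elim
        | inr b0 =>
          cases e1 : v 1 with
          | inl x => exact (hf ⟨1, x, e1⟩).elim
          | inr b1 => rw [e0, e1] at h01; rw [show b0 = b1 from h01]
      simp [cod, Fin.sum_univ_succ, ha0, key]
      split_ifs <;> simp
    · intro v _
      rw [opC_cod]
      have : opC (!true) (sh p (Fin n ×ₗ Fin p)) a0 = 0 := by
        funext w
        have : ∀ i : ℕ, a0 ((sh p (Fin n ×ₗ Fin p))^[i] ∘ w) = a0 w := by
          intro i
          simp only [ha0, Function.comp_apply, sh_iter]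
          cases w 0 <;> simp
        simp [opC, this]
      rw [this]; simp [cod]
  · refine ⟨max ‖a‖ ‖b‖, le_max_of_le_left (norm_nonneg _), fun ε hε => ?_⟩
    obtain ⟨w, hw, hwz⟩ := fill (F := ZMod p) (R := max ‖a‖ ‖b‖) (half_pos hε) (le_max_of_le_left (norm_nonneg _)) (half_lt_self hε)
      (Finsupp.single (fun _ : Fin 1 => b) 1 - Finsupp.single (fun _ : Fin 1 => a) 1)
      (Submodule.sub_mem _ (single_supported ⟨by simp, by simp [hε]⟩) (single_supported ⟨by simp, by simp [hε]⟩))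
      (by rw [map_sub, bd_single, bd_single]; simp; rw [sub_eq_zero]; congr 1; exact Subsingleton.elim _ _)
    refine ⟨w, hw, ?_, ?_⟩
    · rw [hwz]
      have e1 : (h ∘ fun _ : Fin 1 => b) = fun _ => b := funext fun _ => hb
      have e2 : (h ∘ fun _ : Fin 1 => a) = fun _ => a := funext fun _ => ha
      simp [opX, cmap_single, e1, e2]
    · intro L hL
      rw [cod_comp, pair_cod, hwz, map_sub, pair_single, pair_single]
      simp [ha0, hL.q.1, hL.q.2]

end Lam
end Smith


set_option linter.unusedSectionVars false
set_option linter.style.longLine false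
set_option linter.unusedSimpArgs false
namespace Smith
section Spec
variable {p : ℕ} [hp : Fact p.Prime] {n : ℕ}
open Matrix

noncomputable def PP (p : ℕ) [Fact p.Prime] (a : ZMod p) (M : Matrix (Fin n) (Fin n) ℂ) : Matrix (Fin n) (Fin n) ℂ :=
  (p : ℂ)⁻¹ • ∑ j : ZMod p, ZMod.stdAddChar (-(a * j)) • M ^ j.val

lemma pow_add_val {M : Matrix (Fin n) (Fin n) ℂ} (hM : M ^ p = 1) (j k : ZMod p) : M ^ (j + k).val = M ^ j.val * M ^ k.val := by
  rw [ZMod.val_add, ← pow_add]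
  conv_rhs => rw [← Nat.mod_add_div (j.val + k.val) p, pow_add, pow_mul, hM, one_pow, mul_one]

lemma p_ne : (p : ℂ) ≠ 0 := Nat.cast_ne_zero.2 hp.out.ne_zero

lemma M_PP {M : Matrix (Fin n) (Fin n) ℂ} (hM : M ^ p = 1) (a k : ZMod p) :
    M ^ k.val * PP p a M = ZMod.stdAddChar (a * k) • PP p a M := by
  rw [PP, mul_smul_comm, smul_comm (ZMod.stdAddChar (a * k) : ℂ)]
  congr 1
  rw [Finset.mul_sum, Finset.smul_sum]
  rw [← Equiv.sum_comp (Equiv.addLeft k) (fun j => ZMod.stdAddChar (a * k) • ZMod.stdAddChar (-(a * j)) • M ^ j.val)]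
  refine Finset.sum_congr rfl fun j _ => ?_
  rw [Equiv.coe_addLeft, pow_add_val hM, mul_smul_comm, smul_smul, ← AddChar.map_add_eq_mul]
  congr 2; ring

lemma PP_idem {M : Matrix (Fin n) (Fin n) ℂ} (hM : M ^ p = 1) (a : ZMod p) : PP p a M * PP p a M = PP p a M := by
  conv_lhs => lhs; rw [PP]
  rw [smul_mul_assoc, Finset.sum_mul]
  have : ∀ j : ZMod p, (ZMod.stdAddChar (-(a * j)) • M ^ j.val) * PP p a M = PP p a M := by
    intro j
    rw [smul_mul_assoc, M_PP hM, smul_smul, ← AddChar.map_add_eq_mul]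
    simp
  simp only [this, Finset.sum_const, Finset.card_univ, ZMod.card]
  rw [← Nat.cast_smul_eq_nsmul ℂ, smul_smul, inv_mul_cancel₀ p_ne, one_smul]

lemma PP_sum (M : Matrix (Fin n) (Fin n) ℂ) : ∑ a : ZMod p, PP p a M = 1 := by
  simp only [PP]
  rw [← Finset.smul_sum, Finset.sum_comm]
  have : ∀ j : ZMod p, ∑ a : ZMod p, (ZMod.stdAddChar (-(a * j)) • M ^ j.val) = if j = 0 then (p : ℂ) • (1 : Matrix (Fin n) (Fin n) ℂ) else 0 := by
    intro j
    rw [← Finset.sum_smul]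
    have h := AddChar.sum_mulShift (-j) (ZMod.isPrimitive_stdAddChar p)
    simp only [mul_neg, ZMod.card] at h
    rw [h]
    by_cases hj : j = 0
    · simp [hj]
    · simp [hj]
  simp only [this]
  simp [smul_smul, p_ne]

lemma PP_nat {M : Matrix (Fin n) (Fin n) ℂ} (hM : M ^ p = 1) (a : ZMod p) : ∃ k : ℕ, trace (PP p a M) = k ∧ (k = 0 → PP p a M = 0) := by
  set f := Matrix.toLin' (PP p a M) with hf
  have hi : IsIdempotentElem f := by
    rw [IsIdempotentElem, hf, Module.End.mul_eq_comp, ← Matrix.toLin'_mul, PP_idem hM]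
  have ht : trace (PP p a M) = LinearMap.trace ℂ _ f := by rw [hf, Matrix.trace_toLin'_eq]
  have h1 := (LinearMap.IsIdempotentElem.isProj_range f hi).trace
  refine ⟨_, ht.trans h1, fun h0 => ?_⟩
  have h2 : LinearMap.trace ℂ _ f = 0 := by rw [h1, h0]; simp
  have := (LinearMap.IsIdempotentElem.trace_eq_zero_iff hi).1 h2
  rw [hf] at this
  simpa using this

noncomputable def rk (p : ℕ) [Fact p.Prime] (a : ZMod p) (M : Matrix (Fin n) (Fin n) ℂ) : ℕ := ⌊(trace (PP p a M)).re⌋₊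

lemma rk_spec {M : Matrix (Fin n) (Fin n) ℂ} (hM : M ^ p = 1) (a : ZMod p) : trace (PP p a M) = rk p a M := by
  obtain ⟨k, h1, -⟩ := PP_nat hM a
  rw [rk, h1]; simp

lemma rk_zero {M : Matrix (Fin n) (Fin n) ℂ} (hM : M ^ p = 1) (a : ZMod p) (h : rk p a M = 0) : PP p a M = 0 := by
  obtain ⟨k, h1, h2⟩ := PP_nat hM a
  rw [rk, h1] at h
  exact h2 (by simpa using h)

lemma rk_sum {M : Matrix (Fin n) (Fin n) ℂ} (hM : M ^ p = 1) : ∑ a : ZMod p, rk p a M = n := by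
  have : ∑ a : ZMod p, ((rk p a M : ℕ) : ℂ) = n := by
    simp only [← rk_spec hM]
    rw [← Matrix.trace_sum, PP_sum]; simp
  exact_mod_cast this

lemma eq_one_of_rk {M : Matrix (Fin n) (Fin n) ℂ} (hM : M ^ p = 1) (h : ∀ a : ZMod p, a ≠ 0 → rk p a M = 0) : M = 1 := by
  have h1 : PP p 0 M = 1 := by
    rw [← PP_sum (p := p) M, Finset.sum_eq_single 0]
    · intro a _ ha; exact rk_zero hM a (h a ha)
    · simp
  have := M_PP hM 0 1
  rw [h1] at this
  simpa [ZMod.val_one] using this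

lemma fix_of_rk {M : Matrix (Fin n) (Fin n) ℂ} (hM : M ^ p = 1) (h : rk p 0 M = 0) (v : Fin n → ℂ) (hv : M *ᵥ v = v) : v = 0 := by
  have h1 : ∀ k : ℕ, M ^ k *ᵥ v = v := by
    intro k
    induction k with
    | zero => simp
    | succ k ih => rw [pow_succ, ← Matrix.mulVec_mulVec, hv, ih]
  have h2 : PP p 0 M *ᵥ v = v := by
    simp only [PP, zero_mul, neg_zero, AddChar.map_zero_eq_one, one_smul, Matrix.smul_mulVec, Matrix.sum_mulVec, h1]
    simp [← Nat.cast_smul_eq_nsmul ℂ, smul_smul, p_ne]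
  rw [rk_zero hM 0 h] at h2
  simpa using h2.symm

lemma eigvec {M : Matrix (Fin n) (Fin n) ℂ} (hM : M ^ p = 1) (a : ZMod p) (h : rk p a M ≠ 0) :
    ∃ v : Fin n → ℂ, v ≠ 0 ∧ ∀ k : ZMod p, M ^ k.val *ᵥ v = (ZMod.stdAddChar (a * k) : ℂ) • v := by
  have h1 : PP p a M ≠ 0 := by
    intro h0
    have := rk_spec hM a
    rw [h0] at this
    exact h (by simpa using this.symm)
  obtain ⟨w, hw⟩ : ∃ w, PP p a M *ᵥ w ≠ 0 := by
    by_contra! H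
    apply h1
    ext i j
    have := congrFun (H (Pi.single j 1)) i
    simpa using this
  refine ⟨_, hw, fun k => ?_⟩
  rw [Matrix.mulVec_mulVec, M_PP hM, Matrix.smul_mulVec]

/-- conjugation relation -/
lemma rk_conj {M M' G : Matrix (Fin n) (Fin n) ℂ} (hM' : M' ^ p = 1) (hG : IsUnit G) (s : ZMod p) (hs : s ≠ 0)
    (h : G * M = M' ^ s.val * G) (a : ZMod p) : rk p (a * s) M = rk p a M' := by
  have h1 : ∀ k : ℕ, G * M ^ k = (M' ^ s.val) ^ k * G := by
    intro k
    induction k with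
    | zero => simp
    | succ k ih => rw [pow_succ, ← mul_assoc, ih, mul_assoc, h, ← mul_assoc, ← pow_succ]
  have h2 : ∀ j : ZMod p, trace (M ^ j.val) = trace (M' ^ (s * j).val) := by
    intro j
    obtain ⟨u, rfl⟩ := hG
    have e : M' ^ (s * j).val = (M' ^ s.val) ^ j.val := by
      rw [← pow_mul, ZMod.val_mul]
      conv_rhs => rw [← Nat.mod_add_div (s.val * j.val) p, pow_add, pow_mul _ p, hM', one_pow, mul_one]
    have : M ^ j.val = (↑u⁻¹ : Matrix (Fin n) (Fin n) ℂ) * (M' ^ (s * j).val * u) := by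
      rw [e, ← h1, ← mul_assoc]; simp
    rw [this, Matrix.trace_mul_comm, mul_assoc]; simp
  have h3 : trace (PP p (a * s) M) = trace (PP p a M') := by
    simp only [PP, Matrix.trace_smul, Matrix.trace_sum, h2]
    congr 1
    rw [← Equiv.sum_comp (Equiv.mulLeft₀ s hs) (fun j => ZMod.stdAddChar (-(a * j)) • trace (M' ^ j.val))]
    refine Finset.sum_congr rfl fun j _ => ?_
    simp [mul_assoc]
  rw [rk, rk, h3]

/-- real matrices -/
lemma rk_neg (A : Matrix (Fin n) (Fin n) ℝ) (a : ZMod p) :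
    rk p (-a) (A.map (algebraMap ℝ ℂ)) = rk p a (A.map (algebraMap ℝ ℂ)) := by
  have h0 : ∀ k : ℕ, (A.map (algebraMap ℝ ℂ)) ^ k = (A ^ k).map (algebraMap ℝ ℂ) := by
    intro k
    exact (map_pow (algebraMap ℝ ℂ).mapMatrix A k).symm
  have h1 : trace (PP p (-a) (A.map (algebraMap ℝ ℂ))) = (starRingEnd ℂ) (trace (PP p a (A.map (algebraMap ℝ ℂ)))) := by
    simp only [PP, Matrix.trace_smul, Matrix.trace_sum, smul_eq_mul, map_mul, map_sum, map_inv₀, Complex.conj_natCast]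
    congr 1
    refine Finset.sum_congr rfl fun j _ => ?_
    congr 1
    · rw [← AddChar.map_neg_eq_conj]; congr 1; ring
    · rw [h0]
      have : trace ((A ^ j.val).map (algebraMap ℝ ℂ)) = ((trace (A ^ j.val) : ℝ) : ℂ) := by
        simp [Matrix.trace]
      rw [this, Complex.conj_ofReal]
  rw [rk, rk, h1, Complex.conj_re]

end Spec
end Smith


set_option linter.unusedSectionVars false
set_option linter.style.longLine false
set_option linter.unusedSimpArgs false
namespace Smith
section Ana
variable {p : ℕ} [hp : Fact p.Prime] {n : ℕ}
open Matrix

/-- complex matrix of a real endomorphism -/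
noncomputable def cm {n : ℕ} : (EuclideanSpace ℝ (Fin n) →L[ℝ] EuclideanSpace ℝ (Fin n)) →+* Matrix (Fin n) (Fin n) ℂ :=
  ((algebraMap ℝ ℂ).mapMatrix.comp ((LinearMap.toMatrixAlgEquiv (EuclideanSpace.basisFun (Fin n) ℝ).toBasis) : _ →+* _)).comp
    ContinuousLinearMap.toLinearMapRingHom

lemma cm_apply (f : EuclideanSpace ℝ (Fin n) →L[ℝ] EuclideanSpace ℝ (Fin n)) (i j : Fin n) :
    cm f i j = ((f (EuclideanSpace.single j 1) i : ℝ) : ℂ) := by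
  simp [cm, LinearMap.toMatrixAlgEquiv_apply, ContinuousLinearMap.toLinearMapRingHom]
  rfl

lemma cm_real (f : EuclideanSpace ℝ (Fin n) →L[ℝ] EuclideanSpace ℝ (Fin n)) : ∃ A : Matrix (Fin n) (Fin n) ℝ, cm f = A.map (algebraMap ℝ ℂ) :=
  ⟨_, rfl⟩

lemma cm_inj {f g : EuclideanSpace ℝ (Fin n) →L[ℝ] EuclideanSpace ℝ (Fin n)} (h : cm f = cm g) : f = g := by
  have : (f : EuclideanSpace ℝ (Fin n) →ₗ[ℝ] EuclideanSpace ℝ (Fin n)) = g := by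
    refine (EuclideanSpace.basisFun (Fin n) ℝ).toBasis.ext fun j => ?_
    ext i
    have := congrFun (congrFun h i) j
    rw [cm_apply, cm_apply] at this
    simpa using this
  exact ContinuousLinearMap.coe_injective this

lemma cm_cont : Continuous (cm (n := n)) := by
  refine continuous_matrix fun i j => ?_
  simp only [cm_apply]
  refine Complex.continuous_ofReal.comp ?_
  fun_prop

lemma cm_det (f : EuclideanSpace ℝ (Fin n) →L[ℝ] EuclideanSpace ℝ (Fin n)) : (cm f).det = ((f.det : ℝ) : ℂ) := by
  have : (cm f) = (algebraMap ℝ ℂ).mapMatrix (LinearMap.toMatrix (EuclideanSpace.basisFun (Fin n) ℝ).toBasis (EuclideanSpace.basisFun (Fin n) ℝ).toBasis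
      (f : EuclideanSpace ℝ (Fin n) →ₗ[ℝ] EuclideanSpace ℝ (Fin n))) := rfl
  rw [this, ← RingHom.map_det, LinearMap.det_toMatrix]
  rfl

variable {h : EuclideanSpace ℝ (Fin n) → EuclideanSpace ℝ (Fin n)}

lemma smooth_iter (hs : ContDiff ℝ (⊤ : ℕ∞) h) (k : ℕ) : ContDiff ℝ (⊤ : ℕ∞) h^[k] := by
  induction k with
  | zero => exact contDiff_id
  | succ k ih => rw [Function.iterate_succ]; exact ih.comp hs

lemma D_pow (hs : ContDiff ℝ (⊤ : ℕ∞) h) {y : EuclideanSpace ℝ (Fin n)} (hy : h y = y) (k : ℕ) :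
    HasFDerivAt h^[k] ((fderiv ℝ h y) ^ k) y :=
  HasFDerivAt.iterate ((hs.differentiable (by simp)) y).hasFDerivAt hy k

lemma cm_pow_p (hs : ContDiff ℝ (⊤ : ℕ∞) h) (hh : h^[p] = id) {y : EuclideanSpace ℝ (Fin n)} (hy : h y = y) :
    (cm (fderiv ℝ h y)) ^ p = 1 := by
  have h1 := D_pow hs hy p
  rw [hh] at h1
  have := h1.unique (hasFDerivAt_id y)
  rw [← map_pow, this]
  exact map_one cm

lemma rk_const (hp2 : p ≠ 2) (hs : ContDiff ℝ (⊤ : ℕ∞) h) (hh : h^[p] = id) {y z : EuclideanSpace ℝ (Fin n)} (hy : h y = y) (hz : h z = z) (a : ZMod p) :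
    rk p a (cm (fderiv ℝ h y)) = rk p a (cm (fderiv ℝ h z)) := by
  have main : ∀ y z, h y = y → h z = z → ¬ rk p a (cm (fderiv ℝ h y)) < rk p a (cm (fderiv ℝ h z)) := by
    intro y z hy hz hlt
    have hc : Continuous fun y => (trace (PP p a (cm (fderiv ℝ h y)))).re := by
      refine Complex.continuous_re.comp (Continuous.matrix_trace ?_)
      have h1 : Continuous fun y => cm (fderiv ℝ h y) := cm_cont.comp (hs.continuous_fderiv (by simp))
      unfold PP
      refine Continuous.const_smul ?_ (p : ℂ)⁻¹
      refine continuous_finsetSum _ fun j _ => ?_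
      exact (h1.pow _).const_smul (ZMod.stdAddChar (-(a * j)) : ℂ)
    have hv : ∀ y, h y = y → (trace (PP p a (cm (fderiv ℝ h y)))).re = rk p a (cm (fderiv ℝ h y)) := by
      intro y hy
      rw [rk_spec (cm_pow_p hs hh hy)]; simp
    obtain ⟨w, hw, hw'⟩ := (fix_preconnected hp2 hs.continuous hh).intermediate_value (a := y) (b := z) hy hz hc.continuousOn
      (show ((rk p a (cm (fderiv ℝ h y)) : ℝ) + 1/2) ∈ _ by
        simp only [hv y hy, hv z hz]
        have : (rk p a (cm (fderiv ℝ h y)) : ℝ) + 1 ≤ rk p a (cm (fderiv ℝ h z)) := by exact_mod_cast hlt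
        constructor <;> linarith)
    simp only [hv w hw] at hw'
    have h2 : (2 * rk p a (cm (fderiv ℝ h w)) : ℝ) = 2 * rk p a (cm (fderiv ℝ h y)) + 1 := by linarith
    have h3 : 2 * rk p a (cm (fderiv ℝ h w)) = 2 * rk p a (cm (fderiv ℝ h y)) + 1 := by exact_mod_cast h2
    omega
  exact le_antisymm (not_lt.1 (main z y hz hy)) (not_lt.1 (main y z hy hz))

lemma loc_inj {φ : EuclideanSpace ℝ (Fin n) → EuclideanSpace ℝ (Fin n)} (hφ : ContDiff ℝ (⊤ : ℕ∞) φ) {y : EuclideanSpace ℝ (Fin n)}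
    (hi : ∀ v, fderiv ℝ φ y v = 0 → v = 0) : ∃ U : Set (EuclideanSpace ℝ (Fin n)), IsOpen U ∧ y ∈ U ∧ Set.InjOn φ U := by
  have hinj : Function.Injective (fderiv ℝ φ y : EuclideanSpace ℝ (Fin n) →ₗ[ℝ] EuclideanSpace ℝ (Fin n)) := by
    rw [← LinearMap.ker_eq_bot, LinearMap.ker_eq_bot']
    exact hi
  let e := (LinearEquiv.ofInjectiveEndo _ hinj).toContinuousLinearEquiv
  have he : (e : EuclideanSpace ℝ (Fin n) →L[ℝ] EuclideanSpace ℝ (Fin n)) = fderiv ℝ φ y := by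
    ext v; rfl
  have hst : HasStrictFDerivAt φ (e : EuclideanSpace ℝ (Fin n) →L[ℝ] EuclideanSpace ℝ (Fin n)) y := by
    rw [he]
    exact hφ.contDiffAt.hasStrictFDerivAt (by simp)
  refine ⟨(hst.toOpenPartialHomeomorph φ).source, (hst.toOpenPartialHomeomorph φ).open_source, hst.mem_toOpenPartialHomeomorph_source, ?_⟩
  have := (hst.toOpenPartialHomeomorph φ).injOn
  rwa [hst.toOpenPartialHomeomorph_coe] at this

lemma eq_id (hp2 : p ≠ 2) (hs : ContDiff ℝ (⊤ : ℕ∞) h) (hh : h^[p] = id) (H : ∀ y, h y = y → ∀ a : ZMod p, a ≠ 0 → rk p a (cm (fderiv ℝ h y)) = 0) :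
    ∀ x, h x = x := by
  have hcl : IsClosed {x | h x = x} := isClosed_eq hs.continuous continuous_id
  have hop : IsOpen {x | h x = x} := by
    rw [isOpen_iff_mem_nhds]
    intro y hy
    have hA : fderiv ℝ h y = 1 := cm_inj ((eq_one_of_rk (cm_pow_p hs hh hy) (H y hy)).trans (map_one cm).symm)
    set φ : EuclideanSpace ℝ (Fin n) → EuclideanSpace ℝ (Fin n) := fun x => ∑ k ∈ Finset.range p, h^[k] x with hφ
    have hφh : ∀ x, φ (h x) = φ x := by
      intro x
      have := Finset.sum_range_succ' (fun k => h^[k] x) p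
      rw [Finset.sum_range_succ, hh] at this
      simp only [hφ, ← Function.iterate_succ_apply]
      simpa using this.symm
    have hφs : ContDiff ℝ (⊤ : ℕ∞) φ := ContDiff.sum fun k _ => smooth_iter hs k
    have hφD : HasFDerivAt φ (∑ k ∈ Finset.range p, (1 : EuclideanSpace ℝ (Fin n) →L[ℝ] EuclideanSpace ℝ (Fin n))) y := by
      refine HasFDerivAt.fun_sum fun k _ => ?_
      have := D_pow hs hy k
      rwa [hA, one_pow] at this
    obtain ⟨U, hU, hyU, hinj⟩ := loc_inj hφs (y := y) (by
      intro v hv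
      rw [hφD.fderiv] at hv
      have h2 : (p : ℝ) • v = 0 := by
        simpa [← Nat.cast_smul_eq_nsmul ℝ] using hv
      exact (smul_eq_zero.1 h2).resolve_left (Nat.cast_ne_zero.2 hp.out.ne_zero))
    have hyU' : h y ∈ U := by rw [show h y = y from hy]; exact hyU
    filter_upwards [hU.mem_nhds hyU, hs.continuous.continuousAt.preimage_mem_nhds (hU.mem_nhds hyU')] with x hx hx'
    exact hinj hx' hx (hφh x)
  have := IsClopen.eq_univ ⟨hcl, hop⟩ (fix_nonempty hp2 hs.continuous hh)
  intro x
  have hx : x ∈ {x | h x = x} := by rw [this]; trivial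
  exact hx

lemma fix_unique (hp2 : p ≠ 2) (hs : ContDiff ℝ (⊤ : ℕ∞) h) (hh : h^[p] = id) {x y : EuclideanSpace ℝ (Fin n)} (hx : h x = x) (hy : h y = y)
    (H : rk p 0 (cm (fderiv ℝ h x)) = 0) : y = x := by
  obtain ⟨U, hU, hxU, hinj⟩ := loc_inj (φ := fun z => h z - z) (y := x) (hs.sub contDiff_id) (by
    intro v hv
    have e : fderiv ℝ (fun z => h z - z) x = fderiv ℝ h x - 1 := by
      have := (((hs.differentiable (by simp)) x).hasFDerivAt).sub (hasFDerivAt_id x)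
      exact this.fderiv
    rw [e] at hv
    have hv' : fderiv ℝ h x v = v := by simpa [sub_eq_zero] using hv
    have := fix_of_rk (cm_pow_p hs hh hx) H (fun i => ((v i : ℝ) : ℂ)) (by
      funext i
      simp only [Matrix.mulVec, dotProduct, cm_apply]
      rw [← Finset.sum_congr rfl fun j _ => Complex.ofReal_mul _ _, ← Complex.ofReal_sum]
      congr 1
      conv_rhs => rw [← hv']
      have ev : v = ∑ j, (v j) • (EuclideanSpace.single j (1:ℝ) : EuclideanSpace ℝ (Fin n)) := by
        have := (EuclideanSpace.basisFun (Fin n) ℝ).sum_repr v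
        simpa using this.symm
      conv_rhs => rw [ev]
      simp [map_sum, mul_comm])
    ext i
    have := congrFun this i
    simpa using this)
  by_contra hne
  obtain ⟨z, hz, hz1, hz2⟩ := fix_preconnected hp2 hs.continuous hh U {x}ᶜ hU isOpen_compl_singleton
    (fun z _ => by by_cases hzx : z = x
                   · left; rw [hzx]; exact hxU
                   · right; exact hzx) ⟨x, hx, hxU⟩ ⟨y, hy, hne⟩
  apply hz2
  refine hinj hz1 hxU ?_
  simp only [show h z = z from hz, hx, sub_self]

/-- derivative of compositions -/
lemma D_mul {k l : EuclideanSpace ℝ (Fin n) → EuclideanSpace ℝ (Fin n)} (hk : ContDiff ℝ (⊤ : ℕ∞) k) (hl : ContDiff ℝ (⊤ : ℕ∞) l) (y : EuclideanSpace ℝ (Fin n)) :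
    fderiv ℝ (k ∘ l) y = fderiv ℝ k (l y) * fderiv ℝ l y :=
  fderiv_comp y ((hk.differentiable (by simp)) _) ((hl.differentiable (by simp)) _)

lemma D_inv {k l : EuclideanSpace ℝ (Fin n) → EuclideanSpace ℝ (Fin n)} (hk : ContDiff ℝ (⊤ : ℕ∞) k) (hl : ContDiff ℝ (⊤ : ℕ∞) l)
    (hkl : k ∘ l = id) (y : EuclideanSpace ℝ (Fin n)) :
    fderiv ℝ k (l y) * fderiv ℝ l y = 1 := by
  rw [← D_mul hk hl, hkl, fderiv_id]; rfl

lemma D_unit {k l : EuclideanSpace ℝ (Fin n) → EuclideanSpace ℝ (Fin n)} (hk : ContDiff ℝ (⊤ : ℕ∞) k) (hl : ContDiff ℝ (⊤ : ℕ∞) l)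
    (hkl : k ∘ l = id) (hlk : l ∘ k = id) (y : EuclideanSpace ℝ (Fin n)) : IsUnit (fderiv ℝ l y) := by
  have h1 := D_inv hk hl hkl y
  have h2 := D_inv hl hk hlk (l y)
  rw [show k (l y) = y from congrFun hkl y] at h2
  exact ⟨⟨fderiv ℝ l y, fderiv ℝ k (l y), h2, h1⟩, rfl⟩

/-- the determinant is positive -/
def pos (k : EuclideanSpace ℝ (Fin n) → EuclideanSpace ℝ (Fin n)) : Prop := ∀ y, 0 < (fderiv ℝ k y).det

lemma pos_mul {k l : EuclideanSpace ℝ (Fin n) → EuclideanSpace ℝ (Fin n)} (hk : ContDiff ℝ (⊤ : ℕ∞) k) (hl : ContDiff ℝ (⊤ : ℕ∞) l)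
    (h1 : pos k) (h2 : pos l) : pos (k ∘ l) := by
  intro y
  rw [D_mul hk hl]
  have : (fderiv ℝ k (l y) * fderiv ℝ l y).det = (fderiv ℝ k (l y)).det * (fderiv ℝ l y).det := LinearMap.det_comp _ _
  rw [this]
  exact mul_pos (h1 _) (h2 _)

lemma pos_sq {k l : EuclideanSpace ℝ (Fin n) → EuclideanSpace ℝ (Fin n)} (hk : ContDiff ℝ (⊤ : ℕ∞) k) (hl : ContDiff ℝ (⊤ : ℕ∞) l)
    (hkl : k ∘ l = id) (hlk : l ∘ k = id) : pos (k ∘ k) := by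
  have hne : ∀ y, (fderiv ℝ k y).det ≠ 0 := fun y => by
    have := D_unit hl hk hlk hkl y
    exact (this.map (ContinuousLinearMap.toLinearMapRingHom (R₁ := ℝ) (M₁ := EuclideanSpace ℝ (Fin n))) |>.map LinearMap.det).ne_zero
  have hc : Continuous fun y => (fderiv ℝ k y).det := by
    have h1 : Continuous fun y => (cm (fderiv ℝ k y)).det.re :=
      Complex.continuous_re.comp (Continuous.matrix_det (cm_cont.comp (hk.continuous_fderiv (by simp))))
    simpa only [cm_det, Complex.ofReal_re] using h1
  intro y
  rw [D_mul hk hk]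
  have : (fderiv ℝ k (k y) * fderiv ℝ k y).det = (fderiv ℝ k (k y)).det * (fderiv ℝ k y).det := LinearMap.det_comp _ _
  rw [this]
  by_contra hle
  have hsub := (isPreconnected_univ (α := EuclideanSpace ℝ (Fin n))).intermediate_value (Set.mem_univ (k y)) (Set.mem_univ y) hc.continuousOn
  have hsub' := (isPreconnected_univ (α := EuclideanSpace ℝ (Fin n))).intermediate_value (Set.mem_univ y) (Set.mem_univ (k y)) hc.continuousOn
  rcases lt_or_gt_of_ne (hne (k y)) with a | a <;> rcases lt_or_gt_of_ne (hne y) with b | b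
  · exact hle (mul_pos_of_neg_of_neg a b)
  · obtain ⟨z, -, hz⟩ := hsub ⟨a.le, b.le⟩
    exact hne z hz
  · obtain ⟨z, -, hz⟩ := hsub' ⟨b.le, a.le⟩
    exact hne z hz
  · exact hle (mul_pos a b)

end Ana
end Smith


set_option linter.unusedSectionVars false
set_option linter.style.longLine false
set_option linter.unusedSimpArgs false
namespace Smith
section Low
variable {p : ℕ} [hp : Fact p.Prime] {n : ℕ}
open Matrix

lemma det_cyc {m : ℕ} (hm : Even m) (hm0 : 0 < m) {M G : Matrix (Fin m) (Fin m) ℂ} {s a : ZMod p} (k : ℕ) (hk : (k : ZMod p) = s)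
    (hinj : ∀ i < m, ∀ j < m, a * s ^ i = a * s ^ j → i = j)
    (hMG : M * G = G * M ^ k) (hG : G ^ m = 1) {v : Fin m → ℂ} (hv : v ≠ 0) (hMv : M *ᵥ v = (ZMod.stdAddChar a : ℂ) • v) : G.det = -1 := by
  have hstep : ∀ c : ZMod p, ∀ w : Fin m → ℂ, M *ᵥ w = (ZMod.stdAddChar c : ℂ) • w → M *ᵥ (G *ᵥ w) = (ZMod.stdAddChar (c * s) : ℂ) • (G *ᵥ w) := by
    intro c w hw
    have h1 : ∀ q : ℕ, M ^ q *ᵥ w = (ZMod.stdAddChar (c * (q : ZMod p)) : ℂ) • w := by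
      intro q
      induction q with
      | zero => simp
      | succ q ih =>
        rw [pow_succ, ← Matrix.mulVec_mulVec, hw, Matrix.mulVec_smul, ih, smul_smul, ← AddChar.map_add_eq_mul]
        congr 2; push_cast; ring
    rw [Matrix.mulVec_mulVec, hMG, ← Matrix.mulVec_mulVec, h1, hk, Matrix.mulVec_smul]
  have hE : ∀ i : ℕ, M *ᵥ (G ^ i *ᵥ v) = (ZMod.stdAddChar (a * s ^ i) : ℂ) • (G ^ i *ᵥ v) := by
    intro i
    induction i with
    | zero => simpa using hMv
    | succ i ih =>
      have := hstep _ _ ih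
      rw [pow_succ', ← Matrix.mulVec_mulVec, this]
      congr 2; ring_nf
  have hne : ∀ i < m, G ^ i *ᵥ v ≠ 0 := by
    intro i hi h0
    apply hv
    have : G ^ (m - i) *ᵥ (G ^ i *ᵥ v) = v := by
      rw [Matrix.mulVec_mulVec, ← pow_add, Nat.sub_add_cancel hi.le, hG, Matrix.one_mulVec]
    rw [← this, h0, Matrix.mulVec_zero]
  have hli : LinearIndependent ℂ (fun i : Fin m => G ^ (i : ℕ) *ᵥ v) := by
    refine Module.End.eigenvectors_linearIndependent' (Matrix.toLin' M) (fun i : Fin m => (ZMod.stdAddChar (a * s ^ (i:ℕ)) : ℂ)) ?_ _ ?_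
    · intro i j hij
      exact Fin.ext (hinj i i.2 j j.2 (ZMod.injective_stdAddChar hij))
    · intro i
      exact ⟨Module.End.mem_eigenspace_iff.2 (by rw [Matrix.toLin'_apply]; exact hE i), hne i i.2⟩
  set V : Matrix (Fin m) (Fin m) ℂ := Matrix.of (fun i : Fin m => G ^ (i : ℕ) *ᵥ v) with hV
  have hVu : IsUnit V := Matrix.linearIndependent_rows_iff_isUnit.1 hli
  have hVd : V.det ≠ 0 := ((Matrix.isUnit_iff_isUnit_det V).1 hVu).ne_zero
  obtain ⟨m, rfl⟩ : ∃ m', m = m' + 1 := ⟨m - 1, by omega⟩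
  have hrot : V * Gᵀ = V.submatrix (finRotate (m+1)) id := by
    ext i j
    have h1 : (V * Gᵀ) i j = (G *ᵥ (G ^ (i:ℕ) *ᵥ v)) j := by
      simp only [Matrix.mul_apply, hV, Matrix.of_apply, Matrix.transpose_apply, Matrix.mulVec, dotProduct]
      exact Finset.sum_congr rfl fun x _ => mul_comm _ _
    have h2 : G ^ ((i + 1 : Fin (m+1)) : ℕ) = G ^ ((i:ℕ)+1) := by
      rw [Fin.val_add_one]
      split_ifs with hl
      · rw [hl, Fin.val_last, hG, pow_zero]
      · rfl
    rw [h1, Matrix.mulVec_mulVec, ← pow_succ', Matrix.submatrix_apply, finRotate_apply, hV, Matrix.of_apply, h2]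
    rfl
  have hd := congrArg Matrix.det hrot
  rw [Matrix.det_mul, Matrix.det_transpose, Matrix.det_permute, sign_finRotate] at hd
  have hodd : Odd m := by
    rcases Nat.even_or_odd m with h | h
    · exact (Nat.not_even_iff_odd.2 h.add_one hm).elim
    · exact h
  have : V.det * G.det = V.det * (-1) := by
    rw [hd]
    simp [hodd.neg_one_pow]
  exact mul_left_cancel₀ hVd this

abbrev SL2 (p : ℕ) := Matrix.SpecialLinearGroup (Fin 2) (ZMod p)

def uu (b : ZMod p) : SL2 p := ⟨!![1, b; 0, 1], by simp⟩
def ll (b : ZMod p) : SL2 p := ⟨!![1, 0; b, 1], by simp⟩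
noncomputable def tt (s : (ZMod p)ˣ) : SL2 p := ⟨!![(s : ZMod p), 0; 0, (s : ZMod p)⁻¹], by
  rw [Matrix.det_fin_two_of, mul_inv_cancel₀ s.ne_zero]; ring⟩

lemma uu_coe (b : ZMod p) : (uu b : Matrix (Fin 2) (Fin 2) (ZMod p)) = !![1, b; 0, 1] := rfl
lemma ll_coe (b : ZMod p) : (ll b : Matrix (Fin 2) (Fin 2) (ZMod p)) = !![1, 0; b, 1] := rfl
lemma tt_coe (s : (ZMod p)ˣ) : (tt s : Matrix (Fin 2) (Fin 2) (ZMod p)) = !![(s : ZMod p), 0; 0, (s : ZMod p)⁻¹] := rfl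

lemma m2ext {R : Type*} {a b c d a' b' c' d' : R} (h1 : a = a') (h2 : b = b') (h3 : c = c') (h4 : d = d') :
    !![a, b; c, d] = !![a', b'; c', d'] := by rw [h1, h2, h3, h4]

lemma uval_inv (s : (ZMod p)ˣ) : ((s⁻¹ : (ZMod p)ˣ) : ZMod p) = (s : ZMod p)⁻¹ := Units.val_inv_eq_inv_val s

lemma uu_mul (b c : ZMod p) : uu b * uu c = uu (b + c) := by
  apply Subtype.ext
  rw [Matrix.SpecialLinearGroup.coe_mul, uu_coe, uu_coe, uu_coe, Matrix.mul_fin_two]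
  apply m2ext <;> ring

lemma ll_mul (b c : ZMod p) : ll b * ll c = ll (b + c) := by
  apply Subtype.ext
  rw [Matrix.SpecialLinearGroup.coe_mul, ll_coe, ll_coe, ll_coe, Matrix.mul_fin_two]
  apply m2ext <;> ring

lemma tt_mul (b c : (ZMod p)ˣ) : tt b * tt c = tt (b * c) := by
  apply Subtype.ext
  rw [Matrix.SpecialLinearGroup.coe_mul, tt_coe, tt_coe, tt_coe, Matrix.mul_fin_two, Units.val_mul, mul_inv]
  apply m2ext <;> ring

lemma tt_one : (tt 1 : SL2 p) = 1 := by
  apply Subtype.ext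
  rw [tt_coe, Matrix.SpecialLinearGroup.coe_one, Matrix.one_fin_two, Units.val_one, inv_one]

lemma uu_zero : (uu 0 : SL2 p) = 1 := by
  apply Subtype.ext
  rw [uu_coe, Matrix.SpecialLinearGroup.coe_one, Matrix.one_fin_two]

lemma tt_neg_one : (tt (-1) : SL2 p) = -1 := by
  apply Subtype.ext
  rw [tt_coe, Matrix.SpecialLinearGroup.coe_neg, Matrix.SpecialLinearGroup.coe_one, Matrix.one_fin_two, Units.val_neg, Units.val_one, inv_neg, inv_one]
  ext i j; fin_cases i <;> fin_cases j <;> simp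

lemma tt_pow (b : (ZMod p)ˣ) (k : ℕ) : tt b ^ k = tt (b ^ k) := by
  induction k with
  | zero => rw [pow_zero, pow_zero, tt_one]
  | succ k ih => rw [pow_succ, pow_succ, ih, tt_mul]

lemma uu_pow (k : ℕ) : (uu 1 : SL2 p) ^ k = uu k := by
  induction k with
  | zero => rw [pow_zero, Nat.cast_zero, uu_zero]
  | succ k ih => rw [pow_succ, ih, uu_mul, Nat.cast_succ]

lemma tt_uu (s : (ZMod p)ˣ) (b : ZMod p) : tt s * uu b = uu (b * (s:ZMod p)^2) * tt s := by
  have : (s : ZMod p) * (s:ZMod p)⁻¹ = 1 := mul_inv_cancel₀ s.ne_zero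
  apply Subtype.ext
  rw [Matrix.SpecialLinearGroup.coe_mul, Matrix.SpecialLinearGroup.coe_mul, tt_coe, uu_coe, uu_coe, Matrix.mul_fin_two, Matrix.mul_fin_two]
  apply m2ext
  · ring
  · linear_combination (- b * (s:ZMod p)) * this
  · ring
  · ring

lemma uu_tt (s : (ZMod p)ˣ) (b : ZMod p) : uu b * tt s⁻¹ = tt s⁻¹ * uu (b * (s:ZMod p)^2) := by
  have : (s : ZMod p) * (s:ZMod p)⁻¹ = 1 := mul_inv_cancel₀ s.ne_zero
  apply Subtype.ext
  rw [Matrix.SpecialLinearGroup.coe_mul, Matrix.SpecialLinearGroup.coe_mul, tt_coe, uu_coe, uu_coe, Matrix.mul_fin_two, Matrix.mul_fin_two, uval_inv, inv_inv]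
  apply m2ext
  · ring
  · linear_combination (- b * (s:ZMod p)) * this
  · ring
  · ring

lemma tt_prod (s : (ZMod p)ˣ) : tt s = uu (s:ZMod p) * (ll (-(s:ZMod p)⁻¹) * (uu (s:ZMod p) * (uu (-1) * (ll 1 * uu (-1))))) := by
  have : (s : ZMod p) * (s:ZMod p)⁻¹ = 1 := mul_inv_cancel₀ s.ne_zero
  apply Subtype.ext
  simp only [Matrix.SpecialLinearGroup.coe_mul, tt_coe, uu_coe, ll_coe, Matrix.mul_fin_two]
  apply m2ext
  · linear_combination (s:ZMod p) * this
  · linear_combination -this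
  · linear_combination this
  · ring

variable (σ : SL2 p →* Equiv.Perm (EuclideanSpace ℝ (Fin n)))

lemma comp_inv' (g : SL2 p) : (σ g : EuclideanSpace ℝ (Fin n) → EuclideanSpace ℝ (Fin n)) ∘ (σ g⁻¹) = id := by
  rw [← Equiv.Perm.coe_mul, ← map_mul, mul_inv_cancel, map_one]; rfl

lemma pos_tt (hp2 : p ≠ 2) (hσ : ∀ g, ContDiff ℝ (⊤ : ℕ∞) (σ g)) (s : (ZMod p)ˣ) : pos (σ (tt s)) := by
  have hmul : ∀ g g', pos (σ g) → pos (σ g') → pos (σ (g * g')) := by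
    intro g g' h1 h2
    rw [map_mul, Equiv.Perm.coe_mul]
    exact pos_mul (hσ _) (hσ _) h1 h2
  have hsq : ∀ g, pos (σ (g * g)) := by
    intro g
    rw [map_mul, Equiv.Perm.coe_mul]
    refine pos_sq (hσ _) (hσ g⁻¹) (comp_inv' σ g) ?_
    have := comp_inv' σ g⁻¹
    rwa [inv_inv] at this
  have h2 : (2 : ZMod p) ≠ 0 := by
    intro h
    have : ((2:ℕ) : ZMod p) = 0 := by exact_mod_cast h
    rw [ZMod.natCast_eq_zero_iff] at this
    exact hp2 ((Nat.prime_dvd_prime_iff_eq hp.out Nat.prime_two).1 this)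
  have : NeZero (2 : ZMod p) := ⟨h2⟩
  have hu : ∀ b : ZMod p, pos (σ (uu b)) := by
    intro b
    have : uu b = uu (b/2) * uu (b/2) := by rw [uu_mul, add_halves]
    rw [this]; exact hsq _
  have hl : ∀ b : ZMod p, pos (σ (ll b)) := by
    intro b
    have : ll b = ll (b/2) * ll (b/2) := by rw [ll_mul, add_halves]
    rw [this]; exact hsq _
  rw [tt_prod]
  exact hmul _ _ (hu _) (hmul _ _ (hl _) (hmul _ _ (hu _) (hmul _ _ (hu _) (hmul _ _ (hl _) (hu _)))))

theorem lower (hp2 : p ≠ 2) (hσ : ∀ g, ContDiff ℝ (⊤ : ℕ∞) (σ g)) (h1 : σ (uu 1) ≠ 1) (hneg : σ (-1) = 1) :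
    (p % 4 = 3 → p - 1 ≤ n) ∧ (p % 4 = 1 → (p + 1) / 2 ≤ n) := by
  obtain ⟨h, hh_def⟩ : ∃ h : EuclideanSpace ℝ (Fin n) → EuclideanSpace ℝ (Fin n), h = σ (uu 1) := ⟨_, rfl⟩
  have hs : ContDiff ℝ (⊤ : ℕ∞) h := hh_def ▸ hσ _
  have hit : ∀ k : ℕ, h^[k] = σ (uu k) := by
    intro k
    rw [hh_def, Equiv.Perm.iterate_eq_pow, ← map_pow, uu_pow]
  have hh : h^[p] = id := by
    rw [hit]
    have : (uu ((p:ℕ) : ZMod p) : SL2 p) = 1 := by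
      rw [ZMod.natCast_self, uu_zero]
    rw [this, map_one]; rfl
  have hgfix : ∀ (s : (ZMod p)ˣ) x, h x = x → h (σ (tt s) x) = σ (tt s) x := by
    intro s x hx
    have := uu_tt s⁻¹ 1
    rw [inv_inv] at this
    have h3 : (h : EuclideanSpace ℝ (Fin n) → EuclideanSpace ℝ (Fin n)) (σ (tt s) x) = σ (uu 1 * tt s) x := by
      rw [hh_def, map_mul]; rfl
    rw [h3, this, map_mul, Equiv.Perm.mul_apply]
    congr 1
    have h4 := hit (1 * ((s⁻¹ : (ZMod p)ˣ) : ZMod p)^2).val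
    rw [ZMod.natCast_zmod_val] at h4
    rw [← h4, Function.iterate_fixed hx]
  obtain ⟨x0, hx0⟩ := fix_nonempty hp2 hs.continuous hh
  set R : ZMod p → ℕ := fun a => rk p a (cm (fderiv ℝ h x0)) with hRdef
  have hMp := cm_pow_p hs hh hx0
  have hRs : ∀ (s : (ZMod p)ˣ) a, R (a * (s : ZMod p)^2) = R a := by
    intro s a
    have hy := hgfix s x0 hx0
    have e1 : R a = rk p a (cm (fderiv ℝ h (σ (tt s) x0))) := rk_const hp2 hs hh hx0 hy a
    rw [e1]
    refine rk_conj (G := cm (fderiv ℝ (σ (tt s)) x0)) (cm_pow_p hs hh hy) ?_ ((s : ZMod p)^2) (pow_ne_zero _ s.ne_zero) ?_ a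
    · refine IsUnit.map cm (D_unit (hσ (tt s)⁻¹) (hσ _) ?_ (comp_inv' σ (tt s)) x0)
      have := comp_inv' σ (tt s)⁻¹
      rwa [inv_inv] at this
    · rw [← map_mul, ← map_pow, ← map_mul]
      congr 1
      have e2 : (σ (tt s) : EuclideanSpace ℝ (Fin n) → EuclideanSpace ℝ (Fin n)) ∘ h = h^[((s : ZMod p)^2).val] ∘ (σ (tt s)) := by
        rw [hit, ZMod.natCast_zmod_val, hh_def, ← Equiv.Perm.coe_mul, ← Equiv.Perm.coe_mul, ← map_mul, ← map_mul, tt_uu, one_mul]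
      have e3 := D_mul (hσ (tt s)) hs x0
      rw [e2, D_mul (smooth_iter hs _) (hσ _), hx0, (D_pow hs hy _).fderiv] at e3
      exact e3.symm
  have hRn : ∀ a, R (-a) = R a := by
    intro a
    obtain ⟨A, hA⟩ := cm_real (fderiv ℝ h x0)
    simp only [hRdef, hA]
    exact rk_neg A a
  have hRsum : ∑ a, R a = n := rk_sum hMp
  obtain ⟨a, ha0, ha⟩ : ∃ a : ZMod p, a ≠ 0 ∧ R a ≠ 0 := by
    by_contra! H
    apply h1
    ext1 x
    have := eq_id hp2 hs hh (fun y hy a ha => (rk_const hp2 hs hh hy hx0 a).trans (H a ha)) x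
    rw [hh_def] at this
    rw [this]; rfl
  refine ⟨fun h3 => ?_, fun h4 => ?_⟩
  · have key : ∀ b : ZMod p, b ≠ 0 → 1 ≤ R b := by
      intro b hb
      have sqc : ∀ c : ZMod p, c ≠ 0 → IsSquare (c / a) → R c = R a := by
        rintro c hc ⟨s, hs⟩
        have hs0 : s ≠ 0 := by rintro rfl; simp [hc, ha0] at hs
        rw [← hRs (Units.mk0 s hs0) a]
        congr 1
        rw [Units.val_mk0, pow_two, ← hs, mul_div_cancel₀ _ ha0]
      have : R b = R a := by
        by_cases hsq : IsSquare (b / a)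
        · exact sqc b hb hsq
        · rw [← hRn b]
          refine sqc _ (neg_ne_zero.2 hb) ?_
          have hnn : ¬ IsSquare (-1 : ZMod p) := by
            rw [ZMod.exists_sq_eq_neg_one_iff]; omega
          have hF : ringChar (ZMod p) ≠ 2 := by rwa [ZMod.ringChar_zmod_n]
          have c1 := (quadraticChar_neg_one_iff_not_isSquare (F := ZMod p)).2 hnn
          have c2 := (quadraticChar_neg_one_iff_not_isSquare (F := ZMod p)).2 hsq
          refine (quadraticChar_one_iff_isSquare (F := ZMod p) (div_ne_zero (neg_ne_zero.2 hb) ha0)).1 ?_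
          rw [neg_div, ← neg_one_mul, map_mul, c1, c2]; norm_num
      omega
    rw [← hRsum]
    calc p - 1 = ∑ b ∈ Finset.univ.erase (0 : ZMod p), 1 := by simp [ZMod.card]
      _ ≤ ∑ b ∈ Finset.univ.erase (0 : ZMod p), R b := Finset.sum_le_sum fun b hb => key b (Finset.ne_of_mem_erase hb)
      _ ≤ _ := Finset.sum_le_sum_of_subset (Finset.erase_subset _ _)
  · obtain ⟨s, hsgen⟩ := IsCyclic.exists_ofOrder_eq_natCard (α := (ZMod p)ˣ)
    rw [Nat.card_eq_fintype_card, ZMod.card_units_eq_totient, Nat.totient_prime hp.out] at hsgen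
    set m := (p - 1) / 2 with hm
    have hm0 : 0 < m := by have := hp.out.two_le; omega
    have hp1 : p - 1 = 2 * m := by omega
    have hord : orderOf (s ^ 2) = m := by
      rw [orderOf_pow_of_dvd two_ne_zero ⟨m, by rw [hsgen, hp1]⟩, hsgen]
    have hinj : ∀ i < m, ∀ j < m, a * ((s:ZMod p)^2) ^ i = a * ((s:ZMod p)^2) ^ j → i = j := by
      intro i hi j hj hij
      have h5 := mul_left_cancel₀ ha0 hij
      have h6 : (s^2)^i = (s^2)^j := by ext; push_cast; exact h5
      exact pow_injOn_Iio_orderOf (by rw [hord]; exact hi) (by rw [hord]; exact hj) h6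
    have hRi : ∀ i : ℕ, R (a * ((s:ZMod p)^2) ^ i) = R a := by
      intro i
      rw [← hRs (s^i) a]; congr 1; push_cast; ring
    have hsum : R 0 + m ≤ n := by
      set T := (Finset.range m).image (fun i => a * ((s:ZMod p)^2) ^ i) with hT
      have hTc : T.card = m := by
        rw [hT, Finset.card_image_of_injOn, Finset.card_range]
        intro i hi j hj hij
        exact hinj i (by simpa using hi) j (by simpa using hj) hij
      have h0T : (0 : ZMod p) ∉ T := by
        rw [hT, Finset.mem_image]
        rintro ⟨i, -, hi⟩
        exact mul_ne_zero ha0 (pow_ne_zero _ (pow_ne_zero _ s.ne_zero)) hi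
      rw [← hRsum]
      calc R 0 + m = R 0 + ∑ b ∈ T, 1 := by simp [hTc]
        _ ≤ R 0 + ∑ b ∈ T, R b := by
          gcongr with b hb
          obtain ⟨i, -, rfl⟩ := Finset.mem_image.1 hb
          rw [hRi]; omega
        _ = ∑ b ∈ insert 0 T, R b := (Finset.sum_insert h0T).symm
        _ ≤ _ := Finset.sum_le_sum_of_subset (Finset.subset_univ _)
    by_contra hlt
    have hnm : n = m := by omega
    have hR0 : R 0 = 0 := by omega
    have hgx : σ (tt s⁻¹) x0 = x0 := fix_unique hp2 hs hh hx0 (hgfix _ _ hx0) hR0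
    set G := cm (fderiv ℝ (σ (tt s⁻¹)) x0) with hG
    have hMG : cm (fderiv ℝ h x0) * G = G * cm (fderiv ℝ h x0) ^ ((s : ZMod p)^2).val := by
      rw [hG, ← map_mul, ← map_pow, ← map_mul]
      congr 1
      have e2 : h ∘ (σ (tt s⁻¹)) = (σ (tt s⁻¹)) ∘ h^[((s : ZMod p)^2).val] := by
        rw [hit, ZMod.natCast_zmod_val, hh_def, ← Equiv.Perm.coe_mul, ← Equiv.Perm.coe_mul, ← map_mul, ← map_mul, uu_tt, one_mul]
      have e3 := D_mul hs (hσ (tt s⁻¹)) x0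
      rw [e2, D_mul (hσ _) (smooth_iter hs _), hgx, (D_pow hs hx0 _).fderiv, Function.iterate_fixed hx0] at e3
      exact e3.symm
    have hGm : G ^ m = 1 := by
      have e1 := (D_pow (hσ (tt s⁻¹)) hgx m)
      have hsm : s⁻¹ ^ m = -1 := by
        have h5 : (s ^ m) ^ 2 = 1 := by rw [← pow_mul, mul_comm, ← hp1, ← hsgen, pow_orderOf_eq_one]
        have h6 : s ^ m ≠ 1 := by
          intro h7
          have := orderOf_dvd_of_pow_eq_one h7
          rw [hsgen, hp1] at this
          have := Nat.le_of_dvd hm0 this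
          omega
        have h8 : s ^ m = -1 := by
          have : ((s^m : (ZMod p)ˣ) : ZMod p)^2 = 1 := by
            rw [← Units.val_pow_eq_pow_val, h5, Units.val_one]
          rcases sq_eq_one_iff.1 this with h9 | h9
          · exact (h6 (Units.ext h9)).elim
          · exact Units.ext h9
        rw [inv_pow, h8]; simp
      have hne1 : (tt (-1 : (ZMod p)ˣ) : SL2 p) = -1 := tt_neg_one
      rw [Equiv.Perm.iterate_eq_pow, ← map_pow, tt_pow, hsm, hne1, hneg] at e1
      have := e1.unique (hasFDerivAt_id x0)
      rw [hG, ← map_pow, this]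
      exact map_one cm
    obtain ⟨v, hv, hv'⟩ := eigvec hMp a ha
    have hMv := hv' 1
    rw [ZMod.val_one, pow_one, mul_one] at hMv
    have hpos := pos_tt σ hp2 hσ s⁻¹ x0
    have hdet : G.det = -1 := by
      clear_value m R
      subst hnm
      exact det_cyc (by rw [Nat.even_iff]; omega) hm0 ((s : ZMod p)^2).val (ZMod.natCast_zmod_val _) hinj hMG hGm hv hMv
    rw [hG, cm_det] at hdet
    have : (fderiv ℝ (σ (tt s⁻¹)) x0).det = -1 := by exact_mod_cast hdet
    linarith

end Low
end Smith


set_option linter.unusedSectionVars false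
set_option linter.style.longLine false
set_option linter.unusedSimpArgs false
namespace Smith
section Weil
variable {p : ℕ} [hp : Fact p.Prime]
open Matrix

lemma two_ne (hp2 : p ≠ 2) : (2 : ZMod p) ≠ 0 := by
  intro h
  have : ((2:ℕ) : ZMod p) = 0 := by exact_mod_cast h
  rw [ZMod.natCast_eq_zero_iff] at this
  exact hp2 ((Nat.prime_dvd_prime_iff_eq hp.out Nat.prime_two).1 this)

abbrev VV (p : ℕ) := ZMod p → ℂ

noncomputable def ps (x : ZMod p) : ℂ := ZMod.stdAddChar x

lemma ps_add (x y : ZMod p) : ps (x + y) = ps x * ps y := AddChar.map_add_eq_mul _ _ _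
lemma ps_zero : ps (0 : ZMod p) = 1 := AddChar.map_zero_eq_one _
lemma ps_ne (x : ZMod p) (hx : x ≠ 0) : ps x ≠ 1 := by
  intro h
  apply hx
  apply ZMod.injective_stdAddChar (N := p)
  rw [AddChar.map_zero_eq_one]; exact h
lemma ps_ne0 (x : ZMod p) : ps x ≠ 0 := by
  intro h
  have := ps_add x (-x)
  rw [add_neg_cancel, ps_zero, h, zero_mul] at this
  exact one_ne_zero this
lemma ps_conj (x : ZMod p) : (starRingEnd ℂ) (ps x) = ps (-x) := by
  unfold ps
  rw [AddChar.map_neg_eq_conj]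

/-- Heisenberg operators. -/
noncomputable def HH (a b : ZMod p) : VV p →ₗ[ℂ] VV p where
  toFun f := fun x => ps (b * x + a * b / 2) * f (x + a)
  map_add' f g := by ext x; simp [mul_add]
  map_smul' c f := by ext x; simp; ring

lemma HH_apply (a b : ZMod p) (f : VV p) (x : ZMod p) : HH a b f x = ps (b * x + a * b / 2) * f (x + a) := rfl

noncomputable def PA : VV p →ₗ[ℂ] VV p where
  toFun f := fun x => f (-x)
  map_add' f g := by ext x; simp
  map_smul' c f := by ext x; simp

lemma PA_apply (f : VV p) (x : ZMod p) : PA f x = f (-x) := rfl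
lemma PA_PA : (PA : VV p →ₗ[ℂ] VV p) * PA = 1 := by
  ext f x; simp [PA_apply]

/-- intertwiners -/
structure Int' (g : SL2 p) (A : Module.End ℂ (VV p)) : Prop where
  unit : IsUnit A
  par : A * PA = PA * A
  int : ∀ a b, A * HH a b = HH (g.1 0 0 * a + g.1 0 1 * b) (g.1 1 0 * a + g.1 1 1 * b) * A

lemma Int'.mul {g h : SL2 p} {A B : Module.End ℂ (VV p)} (hA : Int' g A) (hB : Int' h B) : Int' (g * h) (A * B) := by
  refine ⟨hA.unit.mul hB.unit, by rw [mul_assoc, hB.par, ← mul_assoc, hA.par, mul_assoc], ?_⟩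
  intro a b
  rw [mul_assoc, hB.int, ← mul_assoc, hA.int, mul_assoc]
  congr 2
  · rw [Matrix.SpecialLinearGroup.coe_mul, Matrix.mul_apply, Matrix.mul_apply]
    simp only [Fin.sum_univ_two]; ring
  · rw [Matrix.SpecialLinearGroup.coe_mul, Matrix.mul_apply, Matrix.mul_apply]
    simp only [Fin.sum_univ_two]; ring

lemma Int'.one : Int' (1 : SL2 p) 1 := by
  refine ⟨isUnit_one, by simp, ?_⟩
  intro a b
  simp

lemma Int'.smul {g : SL2 p} {A : Module.End ℂ (VV p)} (hA : Int' g A) {c : ℂ} (hc : c ≠ 0) : Int' g (c • A) := by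
  refine ⟨hA.unit.smul (Units.mk0 c hc), by rw [smul_mul_assoc, hA.par, mul_smul_comm], ?_⟩
  intro a b
  rw [smul_mul_assoc, hA.int, mul_smul_comm]

lemma Int'.neg_one : Int' (-1 : SL2 p) PA := by
  refine ⟨⟨⟨PA, PA, PA_PA, PA_PA⟩, rfl⟩, rfl, ?_⟩
  intro a b
  refine LinearMap.ext fun f => funext fun x => ?_
  simp only [Module.End.mul_apply, PA_apply, HH_apply, Matrix.SpecialLinearGroup.coe_neg, Matrix.SpecialLinearGroup.coe_one, Matrix.neg_apply, Matrix.one_apply]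
  simp
  ring_nf
  simp

lemma commutant {C : Module.End ℂ (VV p)} (hC : ∀ a b, C * HH a b = HH a b * C) : ∃ c : ℂ, C = c • 1 := by
  have hC' : ∀ a b f, C (HH a b f) = HH a b (C f) := fun a b f => by
    have := congrArg (fun L => L f) (hC a b); exact this
  refine ⟨C (Pi.single 0 1) 0, ?_⟩
  have h0 : C (Pi.single 0 1) = C (Pi.single 0 1) 0 • Pi.single 0 1 := by
    ext x
    by_cases hx : x = 0
    · subst hx; simp
    · have h1 : HH 0 1 (Pi.single (0 : ZMod p) (1:ℂ)) = Pi.single 0 1 := by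
        ext y
        by_cases hy : y = 0
        · subst hy; simp [HH_apply, ps_zero]
        · simp [HH_apply, hy]
      have h2 := congrFun (hC' 0 1 (Pi.single 0 1)) x
      rw [h1, HH_apply] at h2
      simp only [one_mul, zero_mul, zero_div, add_zero] at h2
      have h3 : (ps x - 1) * C (Pi.single 0 1) x = 0 := by rw [sub_mul, ← h2]; ring
      rcases mul_eq_zero.1 h3 with h4 | h4
      · exact (ps_ne x hx (sub_eq_zero.1 h4)).elim
      · rw [h4]; simp [hx]
  refine LinearMap.pi_ext' fun y => LinearMap.ext_ring ?_
  have h1 : Pi.single y (1:ℂ) = HH (-y) 0 (Pi.single 0 1) := by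
    ext x
    simp only [HH_apply, zero_mul, mul_zero, zero_div, add_zero, ps_zero, one_mul, Pi.single_apply]
    congr 1
    rw [← sub_eq_add_neg, sub_eq_zero]
  simp only [LinearMap.comp_apply, LinearMap.coe_single]
  rw [h1, hC', h0]
  simp

lemma Int'.unique {g : SL2 p} {A B : Module.End ℂ (VV p)} (hA : Int' g A) (hB : Int' g B) : ∃ c : ℂ, c ≠ 0 ∧ B = c • A := by
  obtain ⟨u, rfl⟩ := hA.unit
  have : ∀ a b, ((u⁻¹ : (Module.End ℂ (VV p))ˣ) * B : Module.End ℂ (VV p)) * HH a b = HH a b * ((u⁻¹ : (Module.End ℂ (VV p))ˣ) * B : Module.End ℂ (VV p)) := by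
    intro a b
    rw [mul_assoc, hB.int, Units.inv_mul_eq_iff_eq_mul, ← mul_assoc, ← mul_assoc, hA.int, mul_assoc _ (u : Module.End ℂ (VV p)), Units.mul_inv, mul_one]
  obtain ⟨c, hc⟩ := commutant this
  rw [Units.inv_mul_eq_iff_eq_mul, mul_smul_comm, mul_one] at hc
  refine ⟨c, ?_, hc⟩
  rintro rfl
  rw [zero_smul] at hc
  have := hB.unit
  rw [hc] at this
  exact not_isUnit_zero this

/-- generation -/
lemma gen {Q : SL2 p → Prop} (hmul : ∀ g h, Q g → Q h → Q (g * h)) (hu : ∀ b, Q (uu b)) (hl : ∀ b, Q (ll b)) (g : SL2 p) : Q g := by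
  have key : ∀ g : SL2 p, g.1 1 0 ≠ 0 → Q g := by
    intro g hc
    have : g = uu ((g.1 0 0 - 1) / g.1 1 0) * (ll (g.1 1 0) * uu ((g.1 1 1 - 1) / g.1 1 0)) := by
      have hd := g.2
      rw [Matrix.det_fin_two] at hd
      apply Subtype.ext
      simp only [Matrix.SpecialLinearGroup.coe_mul, uu_coe, ll_coe, Matrix.mul_fin_two]
      rw [Matrix.eta_fin_two g.1]
      apply m2ext
      · simp; field_simp; ring
      · simp; field_simp; linear_combination -hd
      · simp
      · simp; field_simp; ring
    rw [this]
    exact hmul _ _ (hu _) (hmul _ _ (hl _) (hu _))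
  by_cases hc : g.1 1 0 = 0
  · have hd := g.2
    rw [Matrix.det_fin_two, hc, mul_zero, sub_zero] at hd
    have ha : g.1 0 0 ≠ 0 := by intro h; rw [h, zero_mul] at hd; exact zero_ne_one hd
    have : g = ll (-1) * (ll 1 * g) := by
      rw [← mul_assoc, ll_mul]
      have : (ll (-1 + 1) : SL2 p) = 1 := by
        apply Subtype.ext
        rw [ll_coe, Matrix.SpecialLinearGroup.coe_one, Matrix.one_fin_two, neg_add_cancel]
      rw [this, one_mul]
    rw [this]
    refine hmul _ _ (hl _) (key _ ?_)
    rw [Matrix.SpecialLinearGroup.coe_mul, ll_coe, Matrix.mul_apply]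
    simpa [Fin.sum_univ_two, hc] using ha
  · exact key g hc

def ww : SL2 p := ⟨!![0, -1; 1, 0], by simp⟩
lemma ww_coe : ((ww : SL2 p) : Matrix (Fin 2) (Fin 2) (ZMod p)) = !![0, -1; 1, 0] := rfl

lemma Int'.ll (hp2 : p ≠ 2) (c : ZMod p) : ∃ A, Int' (ll c) A := by
  have h2 := two_ne hp2
  let M : ZMod p → Module.End ℂ (VV p) := fun c =>
    { toFun := fun f x => ps (-c * x ^ 2 / 2) * f x
      map_add' := fun f g => by ext x; simp [mul_add]
      map_smul' := fun c f => by ext x; simp; ring }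
  have hM : ∀ c f x, M c f x = ps (-c * x ^ 2 / 2) * f x := fun c f x => rfl
  have hMM : ∀ c, M c * M (-c) = 1 := by
    intro c
    refine LinearMap.ext fun f => funext fun x => ?_
    rw [Module.End.mul_apply, hM, hM, ← mul_assoc, ← ps_add]
    have : -c * x ^ 2 / 2 + - -c * x ^ 2 / 2 = 0 := by ring
    rw [this, ps_zero, one_mul]; rfl
  refine ⟨M c, ⟨⟨M c, M (-c), hMM c, by simpa using hMM (-c)⟩, rfl⟩, ?_, ?_⟩
  · refine LinearMap.ext fun f => funext fun x => ?_
    rw [Module.End.mul_apply, Module.End.mul_apply, hM, PA_apply, PA_apply, hM, neg_sq]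
  · intro a b
    refine LinearMap.ext fun f => funext fun x => ?_
    rw [ll_coe]
    simp only [Module.End.mul_apply, hM, HH_apply, Matrix.of_apply, Matrix.cons_val_zero, Matrix.cons_val_one, Matrix.cons_val', Matrix.cons_val_fin_one, one_mul, zero_mul, add_zero]
    rw [← mul_assoc, ← mul_assoc, ← ps_add, ← ps_add]
    congr 2
    field_simp; ring

lemma Int'.ww (hp2 : p ≠ 2) : ∃ A, Int' (ww : SL2 p) A := by
  refine ⟨(ZMod.dft : VV p ≃ₗ[ℂ] VV p).toLinearMap, ?_, ?_, ?_⟩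
  · exact ⟨⟨(ZMod.dft : VV p ≃ₗ[ℂ] VV p).toLinearMap, (ZMod.dft : VV p ≃ₗ[ℂ] VV p).symm.toLinearMap, by ext; simp, by ext; simp⟩, rfl⟩
  · refine LinearMap.ext fun f => funext fun x => ?_
    simp only [Module.End.mul_apply, PA_apply, LinearEquiv.coe_coe, ZMod.dft_apply]
    rw [← Equiv.sum_comp (Equiv.neg _)]
    simp [PA_apply]
  · intro a b
    refine LinearMap.ext fun f => funext fun x => ?_
    rw [ww_coe]
    simp only [Module.End.mul_apply, HH_apply, LinearEquiv.coe_coe, ZMod.dft_apply, Matrix.of_apply, Matrix.cons_val_zero, Matrix.cons_val_one, Matrix.cons_val', Matrix.cons_val_fin_one, one_mul, zero_mul, add_zero, smul_eq_mul]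
    rw [← Equiv.sum_comp (Equiv.subRight a), Finset.mul_sum]
    refine Finset.sum_congr rfl fun y _ => ?_
    change ps _ * _ = _ * (ps _ * _)
    rw [← mul_assoc, ← mul_assoc, ← ps_add, ← ps_add]
    simp only [Equiv.subRight_apply, sub_add_cancel]
    congr 2
    have h2 := two_ne hp2
    field_simp; ring

lemma Int'.ex (hp2 : p ≠ 2) (g : SL2 p) : ∃ A, Int' g A := by
  have hmul : ∀ g h : SL2 p, (∃ A, Int' g A) → (∃ A, Int' h A) → (∃ A, Int' (g * h) A) := by
    rintro g h ⟨A, hA⟩ ⟨B, hB⟩; exact ⟨_, hA.mul hB⟩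
  refine gen (Q := fun g => ∃ A, Int' g A) hmul ?_ (Int'.ll hp2) g
  intro b
  have : (uu b : SL2 p) = Smith.ww * (Smith.ll (-b) * (Smith.ww * (Smith.ww * Smith.ww))) := by
    apply Subtype.ext
    simp only [Matrix.SpecialLinearGroup.coe_mul, uu_coe, ll_coe, ww_coe, Matrix.mul_fin_two]
    apply m2ext <;> ring
  rw [this]
  exact hmul _ _ (Int'.ww hp2) (hmul _ _ (Int'.ll hp2 _) (hmul _ _ (Int'.ww hp2) (hmul _ _ (Int'.ww hp2) (Int'.ww hp2))))

end Weil
end Smith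


set_option linter.unusedSectionVars false
set_option linter.style.longLine false
set_option linter.unusedSimpArgs false
namespace Smith
section Weil2
variable {p : ℕ} [hp : Fact p.Prime]
open Matrix

noncomputable def VE (p : ℕ) [Fact p.Prime] (ε : ℂ) : Submodule ℂ (VV p) where
  carrier := {f | PA f = ε • f}
  add_mem' := by
    intro f g hf hg
    simp only [Set.mem_ofPred_eq] at *
    rw [map_add, hf, hg, smul_add]
  zero_mem' := by simp
  smul_mem' := by
    intro c f hf
    simp only [Set.mem_ofPred_eq] at *
    rw [map_smul, hf, smul_comm]

lemma mem_VE {ε : ℂ} {f : VV p} : f ∈ VE p ε ↔ PA f = ε • f := Iff.rfl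

lemma PA_PA' (f : VV p) : PA (PA f) = f := by ext x; simp [PA_apply]

noncomputable def prE (ε : ℂ) : VV p →ₗ[ℂ] VV p := (1/2 : ℂ) • (LinearMap.id + ε • PA)

lemma prE_mem {ε : ℂ} (hε : ε * ε = 1) (f : VV p) : prE ε f ∈ VE p ε := by
  rw [mem_VE]
  ext x
  simp [prE, PA_apply]
  linear_combination (-1/2 * f (-x)) * hε

lemma prE_id {ε : ℂ} (hε : ε * ε = 1) {f : VV p} (hf : f ∈ VE p ε) : prE ε f = f := by
  rw [mem_VE] at hf
  simp only [prE, LinearMap.smul_apply, LinearMap.add_apply, LinearMap.id_apply, hf, smul_smul, hε, one_smul]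
  ext x; simp; ring

lemma trace_PA (hp2 : p ≠ 2) : LinearMap.trace ℂ (VV p) PA = 1 := by
  rw [LinearMap.trace_eq_matrix_trace ℂ (Pi.basisFun ℂ (ZMod p)), Matrix.trace]
  have : ∀ x : ZMod p, (LinearMap.toMatrix (Pi.basisFun ℂ (ZMod p)) (Pi.basisFun ℂ (ZMod p)) PA).diag x = if x = 0 then 1 else 0 := by
    intro x
    rw [Matrix.diag_apply, LinearMap.toMatrix_apply]
    simp only [Pi.basisFun_apply, Pi.basisFun_repr, PA_apply, Pi.single_apply]
    congr 1
    have h2 := two_ne hp2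
    rw [neg_eq_iff_add_eq_zero, ← two_mul, mul_eq_zero]
    simp [h2]
  rw [Finset.sum_congr rfl fun x _ => this x]
  simp

lemma finrank_VE (hp2 : p ≠ 2) {ε : ℂ} (hε : ε * ε = 1) : (2 * Module.finrank ℂ (VE p ε) : ℂ) = p + ε := by
  have : LinearMap.IsProj (VE p ε) (prE ε) := ⟨prE_mem hε, fun f hf => prE_id hε hf⟩
  have h := this.trace
  rw [← h, prE, map_smul, map_add, map_smul, trace_PA hp2, LinearMap.trace_id]
  simp

noncomputable def rr {ε : ℂ} (hε : ε * ε = 1) (A : Module.End ℂ (VV p)) : Module.End ℂ (VE p ε) :=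
  (LinearMap.codRestrict (VE p ε) (prE ε) (prE_mem hε)) ∘ₗ A ∘ₗ (VE p ε).subtype

lemma stab {A : Module.End ℂ (VV p)} (hA : A * PA = PA * A) {ε : ℂ} {f : VV p} (hf : f ∈ VE p ε) : A f ∈ VE p ε := by
  rw [mem_VE] at *
  have := congrArg (fun L => L f) hA
  simp only [Module.End.mul_apply] at this
  rw [← this, hf, map_smul]

lemma rr_coe {ε : ℂ} (hε : ε * ε = 1) {A : Module.End ℂ (VV p)} (hA : A * PA = PA * A) (f : VE p ε) : (rr hε A f : VV p) = A f := by
  simp only [rr, LinearMap.comp_apply, LinearMap.codRestrict_apply, Submodule.subtype_apply]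
  exact prE_id hε (stab hA f.2)

lemma rr_mul {ε : ℂ} (hε : ε * ε = 1) {A B : Module.End ℂ (VV p)} (hA : A * PA = PA * A) (hB : B * PA = PA * B) : rr hε (A * B) = rr hε A * rr hε B := by
  refine LinearMap.ext fun f => Subtype.ext ?_
  rw [rr_coe hε (by rw [mul_assoc, hB, ← mul_assoc, hA, mul_assoc]), Module.End.mul_apply, Module.End.mul_apply, rr_coe hε hA, rr_coe hε hB]

lemma rr_one {ε : ℂ} (hε : ε * ε = 1) : rr hε (1 : Module.End ℂ (VV p)) = 1 := by
  refine LinearMap.ext fun f => Subtype.ext ?_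
  rw [rr_coe hε (by simp)]; rfl

lemma rr_smul {ε : ℂ} (hε : ε * ε = 1) (c : ℂ) (A : Module.End ℂ (VV p)) : rr hε (c • A) = c • rr hε A := by
  simp only [rr, LinearMap.smul_comp, LinearMap.comp_smul]

lemma rr_PA {ε : ℂ} (hε : ε * ε = 1) : rr hε (PA : Module.End ℂ (VV p)) = ε • 1 := by
  refine LinearMap.ext fun f => Subtype.ext ?_
  rw [rr_coe hε rfl]
  exact f.2

lemma det_rr_ne {ε : ℂ} (hε : ε * ε = 1) {g : SL2 p} {A : Module.End ℂ (VV p)} (hA : Int' g A) : LinearMap.det (rr hε A) ≠ 0 := by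
  have hpar := hA.par
  obtain ⟨u, rfl⟩ := hA.unit
  have h1 : ((u⁻¹ : (Module.End ℂ (VV p))ˣ) : Module.End ℂ (VV p)) * PA = PA * ((u⁻¹ : (Module.End ℂ (VV p))ˣ) : Module.End ℂ (VV p)) := by
    rw [Units.inv_mul_eq_iff_eq_mul, ← mul_assoc, hpar, mul_assoc, Units.mul_inv, mul_one]
  have h2 := rr_mul hε hpar h1
  rw [Units.mul_inv, rr_one] at h2
  have h3 := congrArg LinearMap.det h2
  rw [map_one, map_mul] at h3
  intro h0
  rw [h0, zero_mul] at h3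
  exact one_ne_zero h3

lemma one_sq' : (1 : ℂ) * 1 = 1 := by norm_num
lemma neg_sq' : (-1 : ℂ) * -1 = 1 := by norm_num

structure NInt (g : SL2 p) (A : Module.End ℂ (VV p)) : Prop where
  int' : Int' g A
  nrm : LinearMap.det (rr one_sq' A) = LinearMap.det (rr neg_sq' A)

lemma dims (hp2 : p ≠ 2) : 2 * Module.finrank ℂ (VE p (-1)) = p - 1 ∧ Module.finrank ℂ (VE p 1) = Module.finrank ℂ (VE p (-1)) + 1 := by
  have h1 := finrank_VE (p := p) hp2 one_sq'
  have h2 := finrank_VE (p := p) hp2 neg_sq'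
  have h1' : 2 * Module.finrank ℂ (VE p 1) = p + 1 := by exact_mod_cast h1
  have h2' : 2 * Module.finrank ℂ (VE p (-1)) + 1 = p := by
    have : (2 * Module.finrank ℂ (VE p (-1)) + 1 : ℂ) = p := by rw [h2]; ring
    exact_mod_cast this
  omega

lemma NInt.unique (hp2 : p ≠ 2) {g : SL2 p} {A B : Module.End ℂ (VV p)} (hA : NInt g A) (hB : NInt g B) : A = B := by
  obtain ⟨c, hc, rfl⟩ := hA.int'.unique hB.int'
  have h := hB.nrm
  rw [rr_smul, rr_smul, LinearMap.det_smul, LinearMap.det_smul, (dims hp2).2, ← hA.nrm] at h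
  have h1 := mul_right_cancel₀ (det_rr_ne _ hA.int') h
  rw [pow_succ] at h1
  have h2 : c = 1 := mul_left_cancel₀ (pow_ne_zero _ hc) (by rw [h1, mul_one])
  rw [h2, one_smul]

lemma NInt.ex (hp2 : p ≠ 2) (g : SL2 p) : ∃ A, NInt g A := by
  obtain ⟨A, hA⟩ := Int'.ex hp2 g
  have h1 := det_rr_ne one_sq' hA
  have h2 := det_rr_ne neg_sq' hA
  refine ⟨(LinearMap.det (rr neg_sq' A) / LinearMap.det (rr one_sq' A)) • A, hA.smul (div_ne_zero h2 h1), ?_⟩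
  rw [rr_smul, rr_smul, LinearMap.det_smul, LinearMap.det_smul, (dims hp2).2, pow_succ, mul_assoc, div_mul_cancel₀ _ h1]

lemma NInt.mul {g h : SL2 p} {A B : Module.End ℂ (VV p)} (hA : NInt g A) (hB : NInt h B) : NInt (g * h) (A * B) := by
  refine ⟨hA.int'.mul hB.int', ?_⟩
  rw [rr_mul _ hA.int'.par hB.int'.par, rr_mul _ hA.int'.par hB.int'.par, map_mul, map_mul, hA.nrm, hB.nrm]

lemma NInt.one : NInt (1 : SL2 p) 1 := by
  refine ⟨Int'.one, ?_⟩
  rw [rr_one, rr_one, map_one, map_one]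

noncomputable def WW (hp2 : p ≠ 2) : SL2 p →* Module.End ℂ (VV p) where
  toFun g := (NInt.ex hp2 g).choose
  map_one' := NInt.unique hp2 (NInt.ex hp2 1).choose_spec NInt.one
  map_mul' g h := NInt.unique hp2 (NInt.ex hp2 (g * h)).choose_spec ((NInt.ex hp2 g).choose_spec.mul (NInt.ex hp2 h).choose_spec)

lemma WW_spec (hp2 : p ≠ 2) (g : SL2 p) : NInt g (WW hp2 g) := (NInt.ex hp2 g).choose_spec

lemma WW_neg_one (hp2 : p ≠ 2) : WW hp2 (-1 : SL2 p) = ((-1 : ℂ) ^ ((p - 1) / 2)) • PA := by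
  refine NInt.unique hp2 (WW_spec hp2 _) ⟨Int'.neg_one.smul (pow_ne_zero _ (by norm_num)), ?_⟩
  have hd := dims (p := p) hp2
  have : Module.finrank ℂ (VE p (-1)) = (p - 1) / 2 := by omega
  rw [rr_smul, rr_smul, LinearMap.det_smul, LinearMap.det_smul, rr_PA, rr_PA, LinearMap.det_smul, LinearMap.det_smul, hd.2, this]
  simp only [map_one, mul_one, one_pow, pow_succ]

lemma WW_stab (hp2 : p ≠ 2) (g : SL2 p) {ε : ℂ} {f : VV p} (hf : f ∈ VE p ε) : WW hp2 g f ∈ VE p ε := stab (WW_spec hp2 g).int'.par hf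

/-- trivial on VE implies entry zero -/
lemma entry (hp2 : p ≠ 2) (hp3 : 3 < p) {ε : ℂ} (hε : ε * ε = 1) {g : SL2 p} (hg : ∀ f ∈ VE p ε, WW hp2 g f = f) : g.1 0 1 = 0 := by
  by_contra ha
  set a := g.1 0 1 with hadef
  set b := g.1 1 1 with hbdef
  have h2 := two_ne hp2
  obtain ⟨y, hy⟩ : ∃ y : ZMod p, y ∉ ({0, a, a / 2} : Finset (ZMod p)) := by
    by_contra! H
    have h1 : (Finset.univ : Finset (ZMod p)).card ≤ ({0, a, a / 2} : Finset (ZMod p)).card := Finset.card_le_card fun y _ => H y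
    rw [Finset.card_univ, ZMod.card] at h1
    have := Finset.card_le_three (a := (0 : ZMod p)) (b := a) (c := a / 2)
    omega
  simp only [Finset.mem_insert, Finset.mem_singleton, not_or] at hy
  obtain ⟨hy0, hya, hy2⟩ := hy
  have hintw := (WW_spec hp2 g).int'.int
  have e1 := hintw 0 1
  have e2 := hintw 0 (-1)
  simp only [mul_zero, zero_add, mul_one, mul_neg, ← hadef, ← hbdef] at e1 e2
  set f : VV p := Pi.single y 1 + ε • Pi.single (-y) 1 with hf
  have hfx : ∀ x, f x = (if x = y then 1 else 0) + ε * (if x = -y then 1 else 0) := by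
    intro x; simp [hf, Pi.single_apply]
  have hfm : f ∈ VE p ε := by
    rw [mem_VE]
    ext x
    rw [PA_apply, Pi.smul_apply, hfx, hfx, smul_eq_mul, mul_add, ← mul_assoc, hε]
    simp only [neg_inj, neg_eq_iff_eq_neg]
    ring
  have hC : HH 0 1 f + HH 0 (-1) f ∈ VE p ε := by
    rw [mem_VE] at hfm ⊢
    ext x
    have := fun x => congrFun hfm x
    simp only [PA_apply, Pi.smul_apply, smul_eq_mul] at this
    simp only [PA_apply, Pi.add_apply, HH_apply, Pi.smul_apply, smul_eq_mul]
    simp [this]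
    ring_nf
  have e3 : WW hp2 g (HH 0 1 f + HH 0 (-1) f) = HH a b (WW hp2 g f) + HH (-a) (-b) (WW hp2 g f) := by
    rw [map_add]
    congr 1
    · exact congrArg (fun L => L f) e1
    · exact congrArg (fun L => L f) e2
  rw [hg _ hC, hg _ hfm] at e3
  have e4 := congrFun e3 (y - a)
  have n1 : f (y - a) = 0 := by
    have c1 : ¬ (y - a = y) := by simpa using ha
    have c2 : ¬ (y - a = -y) := by
      intro h
      apply hy2
      rw [eq_div_iff h2]
      linear_combination h
    rw [hfx, if_neg c1, if_neg c2]; ring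
  have n2 : f (y - a + -a) = 0 := by
    have c1 : ¬ (y - a + -a = y) := by
      intro h
      have : 2 * a = 0 := by linear_combination -h
      rcases mul_eq_zero.1 this with h | h
      · exact h2 h
      · exact ha h
    have c2 : ¬ (y - a + -a = -y) := by
      intro h
      have : 2 * (y - a) = 0 := by linear_combination h
      rcases mul_eq_zero.1 this with h | h
      · exact h2 h
      · exact hya (sub_eq_zero.1 h)
    rw [hfx, if_neg c1, if_neg c2]; ring
  have n3 : f (y - a + a) = 1 := by
    have c2 : ¬ (y = -y) := by
      intro h
      have : 2 * y = 0 := by linear_combination h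
      rcases mul_eq_zero.1 this with h | h
      · exact h2 h
      · exact hy0 h
    rw [sub_add_cancel, hfx, if_pos rfl, if_neg c2]; ring
  simp only [Pi.add_apply, HH_apply, add_zero, n1, n2, n3, mul_zero, mul_one] at e4
  exact ps_ne0 _ e4.symm

lemma faithful (hp2 : p ≠ 2) (hp3 : 3 < p) {ε : ℂ} (hε : ε * ε = 1) {g : SL2 p} (hg : ∀ f ∈ VE p ε, WW hp2 g f = f) :
    g ∈ Subgroup.center (SL2 p) := by
  have hconj : ∀ h : SL2 p, (h * g * h⁻¹).1 0 1 = 0 := by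
    intro h
    refine entry hp2 hp3 hε fun f hf => ?_
    rw [map_mul, map_mul, Module.End.mul_apply, Module.End.mul_apply, hg _ (WW_stab hp2 _ hf), ← Module.End.mul_apply, ← map_mul, mul_inv_cancel, map_one]
    rfl
  have h1 := hconj 1
  have h2 := hconj ww
  have h3 := hconj (uu 1)
  have hwi : (ww : SL2 p)⁻¹.1 = !![0, 1; -1, 0] := by
    rw [Matrix.SpecialLinearGroup.coe_inv, ww_coe, Matrix.adjugate_fin_two_of]; simp
  have hui : (uu 1 : SL2 p)⁻¹.1 = !![1, -1; 0, 1] := by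
    rw [Matrix.SpecialLinearGroup.coe_inv, uu_coe, Matrix.adjugate_fin_two_of]; simp
  rw [one_mul, inv_one, mul_one] at h1
  rw [Matrix.SpecialLinearGroup.coe_mul, Matrix.SpecialLinearGroup.coe_mul, hwi, ww_coe] at h2
  rw [Matrix.SpecialLinearGroup.coe_mul, Matrix.SpecialLinearGroup.coe_mul, hui, uu_coe] at h3
  rw [Matrix.eta_fin_two g.1, Matrix.mul_fin_two, Matrix.mul_fin_two] at h2 h3
  simp at h2 h3
  rw [h1, h2] at h3
  rw [Subgroup.mem_center_iff]
  intro h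
  have hgm : g.1 = !![g.1 0 0, 0; 0, g.1 0 0] := by
    conv_lhs => rw [Matrix.eta_fin_two g.1]
    apply m2ext rfl h1 h2
    linear_combination h3
  apply Subtype.ext
  rw [Matrix.SpecialLinearGroup.coe_mul, Matrix.SpecialLinearGroup.coe_mul, hgm]
  conv_lhs => rw [Matrix.eta_fin_two h.1]
  conv_rhs => rw [Matrix.eta_fin_two h.1]
  rw [Matrix.mul_fin_two, Matrix.mul_fin_two]
  apply m2ext <;> ring

end Weil2
end Smith


set_option linter.unusedSectionVars false
set_option linter.style.longLine false
set_option linter.unusedSimpArgs false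
namespace Smith
section Weil3
variable {p : ℕ} [hp : Fact p.Prime]
open Matrix

lemma GL_embed {G U : Type*} [Group G] [AddCommGroup U] [Module ℝ U] [FiniteDimensional ℝ U] (T : G →* Module.End ℝ U)
    (hT : Function.Injective T) (N : ℕ) (hN : Module.finrank ℝ U ≤ N) : ∃ f : G →* Matrix.GeneralLinearGroup (Fin N) ℝ, Function.Injective f := by
  obtain ⟨k, hk⟩ := Nat.exists_eq_add_of_le hN
  let T2 : G →* Module.End ℝ (U × (Fin k → ℝ)) :=
    { toFun := fun g => (T g).prodMap LinearMap.id
      map_one' := by ext <;> simp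
      map_mul' := fun g h => by ext <;> simp }
  have hT2 : Function.Injective T2 := by
    intro g h hgh
    apply hT
    ext u
    have := congrArg (fun L => (L (u, 0)).1) hgh
    exact this
  have hfr : Module.finrank ℝ (U × (Fin k → ℝ)) = N := by rw [Module.finrank_prod]; simp [hk]
  let b := Module.finBasisOfFinrankEq ℝ (U × (Fin k → ℝ)) hfr
  let e := (LinearMap.toMatrixAlgEquiv b)
  refine ⟨(Units.map (e : Module.End ℝ (U × (Fin k → ℝ)) →* Matrix (Fin N) (Fin N) ℝ)).comp T2.toHomUnits, ?_⟩
  intro g h hgh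
  apply hT2
  have := congrArg Units.val hgh
  exact e.injective this

lemma center_cases {g : SL2 p} (hg : g ∈ Subgroup.center (SL2 p)) : g = 1 ∨ g = -1 := by
  obtain ⟨r, hr, hrg⟩ := Matrix.SpecialLinearGroup.mem_center_iff.1 hg
  rw [Fintype.card_fin] at hr
  rcases sq_eq_one_iff.1 hr with rfl | rfl
  · left
    apply Subtype.ext
    rw [Matrix.SpecialLinearGroup.coe_one, ← hrg]
    exact map_one _
  · right
    apply Subtype.ext
    rw [Matrix.SpecialLinearGroup.coe_neg, Matrix.SpecialLinearGroup.coe_one, ← hrg, map_neg]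
    exact congrArg Neg.neg (map_one _)

lemma PSL_embed (hp2 : p ≠ 2) (U : Submodule ℝ (VV p)) (hst : ∀ g, ∀ f ∈ U, WW hp2 g f ∈ U)
    (hneg : ∀ f ∈ U, WW hp2 (-1) f = f) (hfaith : ∀ g, (∀ f ∈ U, WW hp2 g f = f) → g ∈ Subgroup.center (SL2 p))
    (N : ℕ) (hN : Module.finrank ℝ U ≤ N) :
    ∃ f : Matrix.ProjectiveSpecialLinearGroup (Fin 2) (ZMod p) →* Matrix.GeneralLinearGroup (Fin N) ℝ, Function.Injective f := by
  let T : SL2 p →* Module.End ℝ U :=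
    { toFun := fun g => ((WW hp2 g).restrictScalars ℝ).restrict (hst g)
      map_one' := by
        refine LinearMap.ext fun f => Subtype.ext ?_
        change WW hp2 1 f = f
        rw [map_one]; rfl
      map_mul' := fun g h => by
        refine LinearMap.ext fun f => Subtype.ext ?_
        change WW hp2 (g * h) f = WW hp2 g (WW hp2 h f)
        rw [map_mul]; rfl }
  have hTa : ∀ g (f : U), (T g f : VV p) = WW hp2 g f := fun g f => rfl
  let T' := QuotientGroup.lift (Subgroup.center (SL2 p)) T (by
    intro g hg
    refine LinearMap.ext fun f => Subtype.ext ?_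
    rw [hTa]
    rcases center_cases hg with rfl | rfl
    · rw [map_one]; rfl
    · exact hneg _ f.2)
  refine GL_embed T' ?_ N hN
  rw [injective_iff_map_eq_one]
  intro q
  induction q using QuotientGroup.induction_on with
  | H g =>
    intro hq
    rw [QuotientGroup.eq_one_iff]
    apply hfaith
    intro f hf
    have := congrArg (fun L => ((L ⟨f, hf⟩ : U) : VV p)) hq
    exact this

theorem linear3 (hp2 : p ≠ 2) (hp3 : 3 < p) (h : p % 4 = 3) : ∃ f : Matrix.ProjectiveSpecialLinearGroup (Fin 2) (ZMod p) →* Matrix.GeneralLinearGroup (Fin (p - 1)) ℝ, Function.Injective f := by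
  refine PSL_embed hp2 ((VE p (-1)).restrictScalars ℝ) (fun g f hf => WW_stab hp2 g hf) ?_ (fun g hg => faithful hp2 hp3 neg_sq' hg) _ ?_
  · intro f hf
    have hodd : Odd ((p - 1) / 2) := by rw [Nat.odd_iff]; omega
    have hf' : PA f = (-1 : ℂ) • f := hf
    rw [WW_neg_one, hodd.neg_one_pow, LinearMap.smul_apply, hf', smul_smul, neg_sq', one_smul]
  · have : Module.finrank ℝ ((VE p (-1)).restrictScalars ℝ) = 2 * Module.finrank ℂ (VE p (-1)) := finrank_real_of_complex (VE p (-1))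
    rw [this, (dims hp2).1]

/-- antilinear involution -/
noncomputable def JJ (i : ZMod p) (f : VV p) : VV p := fun x => (starRingEnd ℂ) (f (i * x))

lemma JJ_apply (i : ZMod p) (f : VV p) (x : ZMod p) : JJ i f x = (starRingEnd ℂ) (f (i * x)) := rfl
lemma JJ_add (i : ZMod p) (f g : VV p) : JJ i (f + g) = JJ i f + JJ i g := by ext x; simp [JJ_apply]
lemma JJ_smul (i : ZMod p) (c : ℂ) (f : VV p) : JJ i (c • f) = (starRingEnd ℂ) c • JJ i f := by ext x; simp [JJ_apply]
lemma JJ_JJ {i : ZMod p} (hi : i * i = -1) (f : VV p) : JJ i (JJ i f) = PA f := by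
  ext x
  rw [JJ_apply, JJ_apply, PA_apply, ← mul_assoc, hi]; simp
lemma JJ_inv {i : ZMod p} (hi : i * i = -1) (f : VV p) : JJ i (JJ (-i) f) = f := by
  ext x
  rw [JJ_apply, JJ_apply, ← mul_assoc, neg_mul, hi]; simp
lemma JJ_inv' {i : ZMod p} (hi : i * i = -1) (f : VV p) : JJ (-i) (JJ i f) = f := by
  ext x
  rw [JJ_apply, JJ_apply, ← mul_assoc, mul_neg, hi]; simp

lemma JJ_PA (i : ZMod p) (f : VV p) : JJ i (PA f) = PA (JJ i f) := by
  ext x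
  simp [JJ_apply, PA_apply]

lemma JJ_HH {i : ZMod p} (hi : i * i = -1) (a b : ZMod p) (f : VV p) : JJ i (HH a b f) = HH (-i * a) (-i * b) (JJ i f) := by
  ext x
  rw [JJ_apply, HH_apply, HH_apply, JJ_apply, map_mul, ps_conj]
  congr 2
  · congr 1
    linear_combination (-(a * b / 2)) * hi
  · congr 1
    linear_combination a * hi

noncomputable def cj (i : ZMod p) (A : Module.End ℂ (VV p)) : Module.End ℂ (VV p) where
  toFun f := JJ i (A (JJ (-i) f))
  map_add' f g := by rw [JJ_add, map_add, JJ_add]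
  map_smul' c f := by rw [JJ_smul, map_smul, JJ_smul]; simp

lemma cj_apply (i : ZMod p) (A : Module.End ℂ (VV p)) (f : VV p) : cj i A f = JJ i (A (JJ (-i) f)) := rfl

lemma cj_mul {i : ZMod p} (hi : i * i = -1) (A B : Module.End ℂ (VV p)) : cj i (A * B) = cj i A * cj i B := by
  refine LinearMap.ext fun f => ?_
  rw [Module.End.mul_apply, cj_apply, cj_apply, cj_apply, JJ_inv' hi]; rfl

lemma cj_one {i : ZMod p} (hi : i * i = -1) : cj i (1 : Module.End ℂ (VV p)) = 1 := by
  refine LinearMap.ext fun f => ?_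
  rw [cj_apply, Module.End.one_apply, JJ_inv hi]; rfl

lemma cj_PA {i : ZMod p} (hi : i * i = -1) : cj i (PA : Module.End ℂ (VV p)) = PA := by
  refine LinearMap.ext fun f => ?_
  rw [cj_apply, JJ_PA, JJ_inv hi]

lemma cj_HH {i : ZMod p} (hi : i * i = -1) (a b : ZMod p) : cj i (HH a b) = HH (-i * a) (-i * b) := by
  refine LinearMap.ext fun f => ?_
  rw [cj_apply, JJ_HH hi, JJ_inv hi]

lemma cj_int {i : ZMod p} (hi : i * i = -1) {g : SL2 p} {A : Module.End ℂ (VV p)} (hA : Int' g A) : Int' g (cj i A) := by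
  refine ⟨?_, ?_, ?_⟩
  · obtain ⟨u, rfl⟩ := hA.unit
    exact ⟨⟨cj i u, cj i (u⁻¹ : (Module.End ℂ (VV p))ˣ), by rw [← cj_mul hi, Units.mul_inv, cj_one hi], by rw [← cj_mul hi, Units.inv_mul, cj_one hi]⟩, rfl⟩
  · have := congrArg (cj i) hA.par
    rwa [cj_mul hi, cj_mul hi, cj_PA hi] at this
  · intro a b
    have := congrArg (cj i) (hA.int (i * a) (i * b))
    rw [cj_mul hi, cj_mul hi, cj_HH hi, cj_HH hi] at this
    have e : ∀ z : ZMod p, -i * (i * z) = z := fun z => by linear_combination (-z) * hi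
    have e2 : ∀ x y z w : ZMod p, -i * (x * (i * z) + y * (i * w)) = x * z + y * w := fun x y z w => by linear_combination (-(x * z + y * w)) * hi
    rwa [e, e, e2, e2] at this

lemma perfect (hp2 : p ≠ 2) (hp3 : 3 < p) (l : SL2 p →* ℂ) (g : SL2 p) : l g = 1 := by
  have hne : ∀ g, l g ≠ 0 := by
    intro g h0
    have := map_mul l g g⁻¹
    rw [mul_inv_cancel, map_one, h0, zero_mul] at this
    exact one_ne_zero this
  have h2 := two_ne hp2
  have h3 : (3 : ZMod p) ≠ 0 := by
    intro h
    have : ((3:ℕ) : ZMod p) = 0 := by exact_mod_cast h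
    rw [ZMod.natCast_eq_zero_iff] at this
    have := Nat.le_of_dvd (by norm_num) this
    omega
  have hu : ∀ b, l (uu b) = 1 := by
    intro b
    have h := congrArg l (tt_uu (Units.mk0 2 h2) (b / 3))
    rw [map_mul, map_mul, mul_comm, Units.val_mk0] at h
    have h := mul_right_cancel₀ (hne _) h
    have e : b / 3 * 2 ^ 2 = b / 3 + b := by field_simp; ring
    rw [e, ← uu_mul, map_mul] at h
    exact (mul_left_cancel₀ (hne _) (by rw [mul_one]; exact h)).symm
  have hl : ∀ b, l (ll b) = 1 := by
    intro b
    have h : (ll b : SL2 p) * ww = ww * uu (-b) := by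
      apply Subtype.ext
      simp only [Matrix.SpecialLinearGroup.coe_mul, uu_coe, ll_coe, ww_coe, Matrix.mul_fin_two]
      apply m2ext <;> ring
    have h := congrArg l h
    rw [map_mul, map_mul, hu, mul_one] at h
    exact mul_right_cancel₀ (hne ww) (by rw [one_mul]; exact h)
  exact gen (Q := fun g => l g = 1) (fun g h hg hh => by rw [map_mul, hg, hh, one_mul]) hu hl g

lemma WW_ne (hp2 : p ≠ 2) (g : SL2 p) : WW hp2 g ≠ 0 := by
  intro h
  have := (WW_spec hp2 g).int'.unit
  rw [h] at this
  exact not_isUnit_zero this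

lemma cj_WW (hp2 : p ≠ 2) (hp3 : 3 < p) {i : ZMod p} (hi : i * i = -1) (g : SL2 p) : cj i (WW hp2 g) = WW hp2 g := by
  have hex : ∀ g, ∃ c : ℂ, cj i (WW hp2 g) = c • WW hp2 g := fun g => by
    obtain ⟨c, -, hc⟩ := (WW_spec hp2 g).int'.unique (cj_int hi (WW_spec hp2 g).int')
    exact ⟨c, hc⟩
  choose c hc using hex
  have hinj : ∀ (g : SL2 p) {a b : ℂ}, a • WW hp2 g = b • WW hp2 g → a = b := fun g a b h => smul_left_injective ℂ (WW_ne hp2 g) h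
  let l : SL2 p →* ℂ :=
    { toFun := c
      map_one' := hinj 1 (by rw [← hc, map_one, cj_one hi, one_smul])
      map_mul' := fun g h => hinj (g * h) (by
        rw [← hc, map_mul, cj_mul hi, hc, hc, smul_mul_smul_comm]) }
  have : c g = 1 := perfect hp2 hp3 l g
  rw [hc, this, one_smul]

theorem linear1 (hp2 : p ≠ 2) (hp3 : 3 < p) (h : p % 4 = 1) : ∃ f : Matrix.ProjectiveSpecialLinearGroup (Fin 2) (ZMod p) →* Matrix.GeneralLinearGroup (Fin ((p + 1) / 2)) ℝ, Function.Injective f := by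
  obtain ⟨i, hi'⟩ : IsSquare (-1 : ZMod p) := by
    rw [ZMod.exists_sq_eq_neg_one_iff]; omega
  have hi := hi'.symm
  have hWJ : ∀ g f, WW hp2 g (JJ i f) = JJ i (WW hp2 g f) := by
    intro g f
    have := congrArg (fun L => L (JJ i f)) (cj_WW hp2 hp3 hi g)
    simp only [cj_apply, JJ_inv' hi] at this
    exact this.symm
  let U : Submodule ℝ (VV p) :=
    { carrier := {f | JJ i f = f}
      add_mem' := by
        intro f g hf hg
        simp only [Set.mem_ofPred_eq] at *
        rw [JJ_add, hf, hg]
      zero_mem' := by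
        ext x; simp [JJ_apply]
      smul_mem' := by
        intro c f hf
        simp only [Set.mem_ofPred_eq] at *
        have : c • f = (c : ℂ) • f := by ext x; simp
        rw [this, JJ_smul, hf, Complex.conj_ofReal] }
  have hU : ∀ f, f ∈ U ↔ JJ i f = f := fun f => Iff.rfl
  have hUE : ∀ f ∈ U, f ∈ VE p 1 := by
    intro f hf
    rw [hU] at hf
    rw [mem_VE, ← JJ_JJ hi, hf, hf, one_smul]
  refine PSL_embed hp2 U ?_ ?_ ?_ _ ?_
  · intro g f hf
    rw [hU] at *
    rw [← hWJ, hf]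
  · intro f hf
    have hev : Even ((p - 1) / 2) := by rw [Nat.even_iff]; omega
    have hf' : PA f = (1 : ℂ) • f := hUE f hf
    rw [WW_neg_one, hev.neg_one_pow, LinearMap.smul_apply, hf', one_smul, one_smul]
  · intro g hg
    refine faithful hp2 hp3 one_sq' fun f hf => ?_
    have hPf : PA f = f := by rw [mem_VE, one_smul] at hf; exact hf
    have h1 : f + JJ i f ∈ U := by
      rw [hU, JJ_add, JJ_JJ hi, hPf, add_comm]
    have h2 : Complex.I • (f - JJ i f) ∈ U := by
      rw [hU, JJ_smul, sub_eq_add_neg, ← neg_one_smul ℂ (JJ i f), JJ_add, JJ_smul, JJ_JJ hi, hPf, Complex.conj_I]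
      ext x; simp; ring
    have e1 := hg _ h1
    have e2 := hg _ h2
    rw [map_smul] at e2
    have e2 := smul_right_injective _ Complex.I_ne_zero e2
    have e3 : f = (1/2 : ℂ) • ((f + JJ i f) + (f - JJ i f)) := by ext x; simp; ring
    rw [e3, map_smul, map_add, e1]
    congr 2
  · let L : (U × U) →ₗ[ℝ] ((VE p 1).restrictScalars ℝ) :=
      { toFun := fun u => ⟨u.1.1 + Complex.I • u.2.1, (VE p 1).add_mem (hUE _ u.1.2) ((VE p 1).smul_mem _ (hUE _ u.2.2))⟩
        map_add' := fun u v => by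
          apply Subtype.ext; ext x; simp; ring
        map_smul' := fun c u => by
          apply Subtype.ext; ext x; simp; ring }
    have hL : Function.Injective L := by
      rw [injective_iff_map_eq_zero]
      rintro ⟨⟨u, hu⟩, ⟨v, hv⟩⟩ h0
      have h1 : u + Complex.I • v = 0 := congrArg Subtype.val h0
      have h2 := congrArg (JJ i) h1
      rw [hU] at hu hv
      rw [JJ_add, JJ_smul, hu, hv, Complex.conj_I] at h2
      have h3 : JJ i (0 : VV p) = 0 := by ext x; simp [JJ_apply]
      rw [h3] at h2
      have h4 : u = 0 := by
        ext x
        have a1 := congrFun h1 x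
        have a2 := congrFun h2 x
        simp at a1 a2 ⊢
        linear_combination (a1 + a2) / 2
      have h5 : v = 0 := by
        rw [h4, zero_add] at h1
        exact (smul_eq_zero.1 h1).resolve_left Complex.I_ne_zero
      subst h4 h5
      rfl
    have h6 := LinearMap.finrank_le_finrank_of_injective hL
    have : Module.finrank ℝ ((VE p 1).restrictScalars ℝ) = 2 * Module.finrank ℂ (VE p 1) := finrank_real_of_complex (VE p 1)
    rw [this, Module.finrank_prod, (dims hp2).2] at h6
    have := (dims (p := p) hp2).1
    omega

end Weil3
end Smith



/-- For an odd prime `p > 3`: if `PSL(2, p)` acts faithfully by diffeomorphisms on `ℝⁿ`,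
then `n ≥ p - 1` when `p ≡ 3 (mod 4)` and `n ≥ (p + 1)/2` when `p ≡ 1 (mod 4)`; these
bounds are sharp, being realized by faithful linear actions on `ℝ^{p-1}`, respectively
`ℝ^{(p+1)/2}`. -/
theorem minimal_euclidean_action_PSL (p : ℕ) (hp : p.Prime) (hpodd : Odd p) (hp3 : 3 < p) :
    (∀ (n : ℕ) (ρ : Matrix.ProjectiveSpecialLinearGroup (Fin 2) (ZMod p) →*
        Equiv.Perm (EuclideanSpace ℝ (Fin n))),
      Function.Injective ρ → (∀ g, ContDiff ℝ (⊤ : ℕ∞) (ρ g)) →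
        (p % 4 = 3 → p - 1 ≤ n) ∧ (p % 4 = 1 → (p + 1) / 2 ≤ n)) ∧
    (p % 4 = 3 → ∃ f : Matrix.ProjectiveSpecialLinearGroup (Fin 2) (ZMod p) →*
        Matrix.GeneralLinearGroup (Fin (p - 1)) ℝ, Function.Injective f) ∧
    (p % 4 = 1 → ∃ f : Matrix.ProjectiveSpecialLinearGroup (Fin 2) (ZMod p) →*
        Matrix.GeneralLinearGroup (Fin ((p + 1) / 2)) ℝ, Function.Injective f) := by
  have hF : Fact p.Prime := ⟨hp⟩
  have hp2 : p ≠ 2 := by omega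
  refine ⟨?_, Smith.linear3 hp2 hp3, Smith.linear1 hp2 hp3⟩
  intro n ρ hρ hsm
  refine Smith.lower (ρ.comp (QuotientGroup.mk' (Subgroup.center (Smith.SL2 p)))) hp2 (fun g => hsm _) ?_ ?_
  · intro h
    have h1 : QuotientGroup.mk' (Subgroup.center (Smith.SL2 p)) (Smith.uu 1) = 1 := by
      apply hρ
      rw [map_one]; exact h
    have h2 : (Smith.uu 1 : Smith.SL2 p) ∈ Subgroup.center (Smith.SL2 p) := (QuotientGroup.eq_one_iff _).1 h1
    rw [Subgroup.mem_center_iff] at h2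
    have h3 := congrArg (fun g : Smith.SL2 p => g.1 0 0) (h2 (Smith.ll 1))
    simp only [Matrix.SpecialLinearGroup.coe_mul, Smith.uu_coe, Smith.ll_coe, Matrix.mul_fin_two] at h3
    simp at h3
  · have h1 : QuotientGroup.mk' (Subgroup.center (Smith.SL2 p)) (-1) = 1 := by
      refine (QuotientGroup.eq_one_iff _).2 ?_
      rw [Subgroup.mem_center_iff]
      intro g; simp
    rw [MonoidHom.comp_apply, h1, map_one]
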